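/- arXiv:1708.09640 — 2 statements merged into one kernel-verified Lean document; each statement's English description precedes it below -/
import Mathlib

section
/- Let 𝓛u = Σ_{i,j} a^{ij} ∂_{ij}u + Σ_i b^i ∂_i u on ℝ^d, where a is locally Lipschitz with values in symmetric positive definite matrices, a is bounded, ⟨ξ, a(x)ξ⟩ ≥ η₀|ξ|² for all x, ξ (some η₀ > 0), and b, V are Borel measurable with sup_x |b(x)| ≤ M and sup_x |V(x)| ≤ γ. Assume the generalized principal eigenvalue satisfies λ*(𝓛,V) ≤ 0. Let u be a C² function on ℝ^d with 𝓛u + Vu = 0 on ℝ^d, and suppose there are ε > 0 and C_ε > 0 such that |u(x)| ≤ C_ε exp(−(M/(2η₀) + √(M²/(4η₀²) + γ/η₀) + ε)|x|) for all x ∈ ℝ^d. Then u ≡ 0. -/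
open Metric Set Filter

noncomputable section

/-- `ℝ^d` as a Euclidean space. -/
abbrev Euc (d : ℕ) := EuclideanSpace ℝ (Fin d)

/-- First partial derivative `∂u/∂xᵢ`. -/
def pd {d : ℕ} (u : Euc d → ℝ) (i : Fin d) (x : Euc d) : ℝ :=
  fderiv ℝ u x (EuclideanSpace.single i 1)

/-- Second partial derivative `∂²u/∂xᵢ∂xⱼ`. -/
def pd2 {d : ℕ} (u : Euc d → ℝ) (i j : Fin d) (x : Euc d) : ℝ :=
  fderiv ℝ (fun y => pd u j y) x (EuclideanSpace.single i 1)

/-- The second-order operator `𝓛u = Σ aᶦʲ ∂ᵢⱼu + Σ bᶦ ∂ᵢu`. -/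
def Lop {d : ℕ} (a : Euc d → Matrix (Fin d) (Fin d) ℝ) (b : Euc d → Euc d)
    (u : Euc d → ℝ) (x : Euc d) : ℝ :=
  (∑ i, ∑ j, a x i j * pd2 u i j x) + ∑ i, b x i * pd u i x

/-- Frobenius norm of a matrix. -/
def frob {d : ℕ} (m : Matrix (Fin d) (Fin d) ℝ) : ℝ :=
  Real.sqrt (∑ i, ∑ j, (m i j) ^ 2)

/-- The quadratic form `⟨ξ, m ξ⟩`. -/
def quadForm {d : ℕ} (m : Matrix (Fin d) (Fin d) ℝ) (ξ : Euc d) : ℝ :=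
  ∑ i, ∑ j, m i j * ξ i * ξ j

/-- Local Hölder continuity on a set. -/
def LocallyHolderOn {E F : Type*} [PseudoMetricSpace E] [PseudoMetricSpace F]
    (f : E → F) (s : Set E) : Prop :=
  ∀ x ∈ s, ∃ (C r : NNReal), 0 < r ∧ r ≤ 1 ∧ ∃ ε > 0, HolderOnWith C r f (Metric.ball x ε ∩ s)

/-- Local Hölder continuity. -/
def LocallyHolder {E F : Type*} [PseudoMetricSpace E] [PseudoMetricSpace F] (f : E → F) : Prop :=
  LocallyHolderOn f Set.univ

/-- The set of `λ ∈ ℝ` admitting a positive C² supersolution of `𝓛φ + Vφ ≤ λφ` on `D`. -/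
def supersolutions {d : ℕ} (a : Euc d → Matrix (Fin d) (Fin d) ℝ) (b : Euc d → Euc d)
    (V : Euc d → ℝ) (D : Set (Euc d)) : Set ℝ :=
  {lam | ∃ φ : Euc d → ℝ, (∀ x ∈ D, 0 < φ x) ∧ ContDiffOn ℝ 2 φ D ∧
    ∀ x ∈ D, Lop a b φ x + V x * φ x ≤ lam * φ x}

/-- The generalized principal eigenvalue `λ*(𝓛,V)` on `D`. -/
def lamStar {d : ℕ} (a : Euc d → Matrix (Fin d) (Fin d) ℝ) (b : Euc d → Euc d)
    (V : Euc d → ℝ) (D : Set (Euc d)) : ℝ :=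
  sInf (supersolutions a b V D)

/-- `λ*(𝓛,V)` is finite: the defining set is nonempty and bounded below. -/
def lamStarFinite {d : ℕ} (a : Euc d → Matrix (Fin d) (Fin d) ℝ) (b : Euc d → Euc d)
    (V : Euc d → ℝ) (D : Set (Euc d)) : Prop :=
  (supersolutions a b V D).Nonempty ∧ BddBelow (supersolutions a b V D)

/-- A ground state of `𝓛 + W` in the open connected set `D`: a positive C² solution of
minimal growth at infinity. -/
def IsGroundState {d : ℕ} (a : Euc d → Matrix (Fin d) (Fin d) ℝ) (b : Euc d → Euc d)
    (W : Euc d → ℝ) (u : Euc d → ℝ) (D : Set (Euc d)) : Prop :=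
  (∀ x ∈ D, 0 < u x) ∧ ContDiffOn ℝ 2 u D ∧ (∀ x ∈ D, Lop a b u x + W x * u x = 0) ∧
  ∀ K : Set (Euc d), IsCompact K → K ⊆ D →
    ∀ v : Euc d → ℝ, ContDiffOn ℝ 2 v (D \ K) → (∀ x ∈ D \ K, 0 < v x) →
      (∀ x ∈ D \ K, Lop a b v x + W x * v x ≤ 0) →
      ∃ K' : Set (Euc d), IsCompact K' ∧ K ⊆ K' ∧ K' ⊆ D ∧
        ∃ κ > 0, ∀ x ∈ D \ K', κ * u x ≤ v x

/-- Membership in `C₀⁺(ℝ^d)`: continuous, nonnegative, not identically zero, vanishing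
at infinity. -/
def C0plus {d : ℕ} (h : Euc d → ℝ) : Prop :=
  Continuous h ∧ (∀ x, 0 ≤ h x) ∧ (∃ x, h x ≠ 0) ∧ Tendsto h (cocompact (Euc d)) (nhds 0)

/-- `λ*` is strictly monotone at `V` on the right. -/
def StrictMonoRight {d : ℕ} (a : Euc d → Matrix (Fin d) (Fin d) ℝ) (b : Euc d → Euc d)
    (V : Euc d → ℝ) : Prop :=
  ∀ h : Euc d → ℝ, C0plus h →
    lamStar a b V Set.univ < lamStar a b (fun x => V x + h x) Set.univ

/-- `λ*` is strictly monotone at `V` (on both sides). -/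
def StrictMonoAt {d : ℕ} (a : Euc d → Matrix (Fin d) (Fin d) ℝ) (b : Euc d → Euc d)
    (V : Euc d → ℝ) : Prop :=
  ∀ h : Euc d → ℝ, C0plus h →
    lamStar a b (fun x => V x - h x) Set.univ < lamStar a b V Set.univ ∧
    lamStar a b V Set.univ < lamStar a b (fun x => V x + h x) Set.univ

/-!
Off its centre, `ψ_θ = r ^ (-B) * exp (-θ r)` satisfies `𝓛ψ_θ ≥ θ (η θ - M) ψ_θ`, the power of `r`
absorbing the trace of `a`. When `θ` exceeds the critical rate, `θ (η θ - M) > γ`, so comparison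
shows that a positive supersolution of `𝓛 + V` dominates a multiple of `ψ_θ`: it decays no faster
than `ψ_θ`, in particular strictly slower than `ψ_θ'` for `θ' > θ`.

Let a solution `u` decay like `ψ_θ'` and be negative at `z`. Since `λ* ≤ 0`, for every `δ > 0`
there is `φ > 0` with `𝓛φ + Vφ ≤ δ φ`. For small `s > 0` the function `w = u + s ψ_θ'`, with the
barrier centred at `z`, is nonpositive on a small sphere around `z`, and outside it satisfies
`𝓛w + Vw > δ w` once `δ` is small: the gain `s (θ' (η θ' - M) - γ) ψ_θ'` beats `δ w = O(δ ψ_θ')`.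
As `w / φ` is at most a function tending to `0` at infinity, a positive value of `w` would give an
interior maximum of `w / φ`, with value `t > 0` say, and there `𝓛w ≤ t 𝓛φ` contradicts the two
inequalities; hence `u < 0` everywhere. But then `-u` is itself a positive supersolution, and it
decays too fast. So `u ≥ 0`, and likewise `-u ≥ 0`.
-/

open scoped Topology

section SecondDerivativeTest

lemma deriv_deriv_nonneg_of_isLocalMin {g : ℝ → ℝ} {t : ℝ} (hg : IsLocalMin g t)
    (hc : ContinuousAt g t) : 0 ≤ deriv (deriv g) t := by
  by_contra! hneg
  have hmax : IsLocalMax g t := isLocalMax_of_deriv_deriv_neg hneg hg.deriv_eq_zero hc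
  have hconst : g =ᶠ[𝓝 t] fun _ => g t := by
    filter_upwards [hg, hmax] with y hge hle using le_antisymm hle hge
  exact hneg.ne (by simpa using hconst.deriv.deriv_eq)

variable {E : Type*} [NormedAddCommGroup E] [NormedSpace ℝ E] {f : E → ℝ} {x : E}

lemma differentiableAt_fderiv_of_contDiffAt_two (hf : ContDiffAt ℝ 2 f x) :
    DifferentiableAt ℝ (fderiv ℝ f) x :=
  (hf.fderiv_right (m := 1) (by norm_num)).differentiableAt one_ne_zero

lemma deriv_deriv_comp_add_smul (hf : ContDiffAt ℝ 2 f x) (v : E) :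
    deriv (deriv fun t : ℝ => f (x + t • v)) 0 = fderiv ℝ (fderiv ℝ f) x v v := by
  have hline : ∀ t : ℝ, HasDerivAt (fun t : ℝ => x + t • v) v t := fun t => by
    simpa using ((hasDerivAt_id t).smul_const v).const_add x
  have hx : Tendsto (fun t : ℝ => x + t • v) (𝓝 0) (𝓝 x) := by
    simpa using (hline 0).continuousAt.tendsto
  have hderiv : deriv (fun t : ℝ => f (x + t • v)) =ᶠ[𝓝 0] fun t => fderiv ℝ f (x + t • v) v := by
    filter_upwards [hx.eventually (hf.eventually (by simp))] with t ht
    exact ((ht.differentiableAt two_ne_zero).hasFDerivAt.comp_hasDerivAt t (hline t)).deriv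
  have hfderiv : HasFDerivAt (fderiv ℝ f) (fderiv ℝ (fderiv ℝ f) x) (x + (0 : ℝ) • v) := by
    simpa using (differentiableAt_fderiv_of_contDiffAt_two hf).hasFDerivAt
  have hcomp : HasDerivAt (fun t : ℝ => fderiv ℝ f (x + t • v))
      (fderiv ℝ (fderiv ℝ f) x v) 0 := hfderiv.comp_hasDerivAt (0 : ℝ) (hline 0)
  rw [hderiv.deriv_eq]
  exact ((ContinuousLinearMap.apply ℝ ℝ v).hasFDerivAt.comp_hasDerivAt (0 : ℝ) hcomp).deriv

lemma fderiv_fderiv_nonneg_of_isLocalMin (hf : ContDiffAt ℝ 2 f x) (hmin : IsLocalMin f x)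
    (v : E) : 0 ≤ fderiv ℝ (fderiv ℝ f) x v v := by
  rw [← deriv_deriv_comp_add_smul hf v]
  have hline : ContinuousAt (fun t : ℝ => x + t • v) 0 := by fun_prop
  apply deriv_deriv_nonneg_of_isLocalMin
  · exact IsLocalMin.comp_continuous (f := f) (by simpa using hmin) hline
  · exact ContinuousAt.comp (g := f) (by simpa using hf.continuousAt) hline

end SecondDerivativeTest

section Lop

variable {d : ℕ} {a : Euc d → Matrix (Fin d) (Fin d) ℝ} {b : Euc d → Euc d} {f g : Euc d → ℝ}
  {x : Euc d}

lemma pd2_eq_fderiv_fderiv (hf : ContDiffAt ℝ 2 f x) (i j : Fin d) :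
    pd2 f i j x =
      fderiv ℝ (fderiv ℝ f) x (EuclideanSpace.single i 1) (EuclideanSpace.single j 1) := by
  unfold pd2 pd
  rw [fderiv_clm_apply (differentiableAt_fderiv_of_contDiffAt_two hf) (differentiableAt_const _)]
  simp

lemma pd2_eq_iteratedFDeriv (hf : ContDiffAt ℝ 2 f x) (i j : Fin d) :
    pd2 f i j x =
      iteratedFDeriv ℝ 2 f x ![EuclideanSpace.single i 1, EuclideanSpace.single j 1] := by
  rw [pd2_eq_fderiv_fderiv hf, iteratedFDeriv_two_apply]
  rfl

lemma Lop_add (hf : ContDiffAt ℝ 2 f x) (hg : ContDiffAt ℝ 2 g x) :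
    Lop a b (f + g) x = Lop a b f x + Lop a b g x := by
  have hfg : ContDiffAt ℝ 2 (f + g) x := hf.add hg
  simp only [Lop, pd, pd2_eq_iteratedFDeriv hf, pd2_eq_iteratedFDeriv hg,
    pd2_eq_iteratedFDeriv hfg, iteratedFDeriv_add_apply hf hg,
    fderiv_add (hf.differentiableAt two_ne_zero) (hg.differentiableAt two_ne_zero),
    add_apply, mul_add, Finset.sum_add_distrib]
  ring

lemma Lop_const_smul (c : ℝ) (hf : ContDiffAt ℝ 2 f x) :
    Lop a b (c • f) x = c * Lop a b f x := by
  have hcf : ContDiffAt ℝ 2 (c • f) x := hf.const_smul c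
  simp only [Lop, pd, pd2_eq_iteratedFDeriv hf, pd2_eq_iteratedFDeriv hcf,
    iteratedFDeriv_const_smul_apply hf, fderiv_const_smul (hf.differentiableAt two_ne_zero),
    smul_apply, smul_eq_mul, mul_left_comm _ c, ← Finset.mul_sum, mul_add]

lemma Lop_neg (hf : ContDiffAt ℝ 2 f x) : Lop a b (-f) x = -Lop a b f x := by
  simpa using Lop_const_smul (a := a) (b := b) (-1) hf

lemma Lop_sub (hf : ContDiffAt ℝ 2 f x) (hg : ContDiffAt ℝ 2 g x) :
    Lop a b (f - g) x = Lop a b f x - Lop a b g x := by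
  have hg' : ContDiffAt ℝ 2 (-g) x := hg.neg
  rw [sub_eq_add_neg, Lop_add hf hg', Lop_neg hg, sub_eq_add_neg]

lemma fderiv_fderiv_apply_eq_sum_pd2 (hf : ContDiffAt ℝ 2 f x) (v : Euc d) :
    fderiv ℝ (fderiv ℝ f) x v v = ∑ i, ∑ j, v i * pd2 f i j x * v j := by
  have hv : v = ∑ i, v i • EuclideanSpace.single i (1 : ℝ) := by
    simpa using ((EuclideanSpace.basisFun (Fin d) ℝ).sum_repr v).symm
  simp only [pd2_eq_fderiv_fderiv hf]
  nth_rw 1 2 [hv]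
  simp only [map_sum, map_smul, sum_apply, smul_apply, smul_eq_mul, Finset.mul_sum]
  rw [Finset.sum_comm]
  refine Finset.sum_congr rfl fun i _ => Finset.sum_congr rfl fun j _ => ?_
  ring

lemma posSemidef_pd2_of_isLocalMin (hf : ContDiffAt ℝ 2 f x) (hmin : IsLocalMin f x) :
    (Matrix.of fun i j => pd2 f i j x).PosSemidef := by
  refine .of_dotProduct_mulVec_nonneg (Matrix.IsHermitian.ext fun i j => ?_) fun v => ?_
  · simpa [pd2_eq_fderiv_fderiv hf] using hf.isSymmSndFDerivAt (by simp) _ _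
  · have hnonneg := fderiv_fderiv_nonneg_of_isLocalMin hf hmin (WithLp.toLp 2 v)
    rw [fderiv_fderiv_apply_eq_sum_pd2 hf] at hnonneg
    simpa [dotProduct, Matrix.mulVec, Finset.mul_sum, mul_assoc] using hnonneg

open scoped MatrixOrder in
lemma sum_mul_nonneg_of_quadForm_nonneg {m H : Matrix (Fin d) (Fin d) ℝ}
    (hm : ∀ ξ, 0 ≤ quadForm m ξ) (hH : H.PosSemidef) : 0 ≤ ∑ i, ∑ j, m i j * H i j := by
  obtain ⟨B, rfl⟩ := CStarAlgebra.nonneg_iff_eq_star_mul_self.mp hH.nonneg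
  have hrows : ∑ i, ∑ j, m i j * (star B * B) i j = ∑ k, quadForm m (WithLp.toLp 2 (B k)) := by
    simp only [quadForm, Matrix.mul_apply, Matrix.star_apply, star_trivial, Finset.mul_sum,
      mul_assoc]
    rw [Finset.sum_comm_cycle]
  rw [hrows]
  exact Finset.sum_nonneg fun k _ => hm _

lemma Lop_nonneg_of_isLocalMin (ha : ∀ ξ, 0 ≤ quadForm (a x) ξ) (hf : ContDiffAt ℝ 2 f x)
    (hmin : IsLocalMin f x) : 0 ≤ Lop a b f x := by
  have hpd : ∀ i, pd f i x = 0 := fun i => by simp [pd, hmin.fderiv_eq_zero]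
  simpa [Lop, hpd] using
    sum_mul_nonneg_of_quadForm_nonneg ha (posSemidef_pd2_of_isLocalMin hf hmin)

lemma Lop_le_Lop_of_isLocalMax_sub (ha : ∀ ξ, 0 ≤ quadForm (a x) ξ) (hf : ContDiffAt ℝ 2 f x)
    (hg : ContDiffAt ℝ 2 g x) (hmax : IsLocalMax (f - g) x) : Lop a b f x ≤ Lop a b g x := by
  have hmin : IsLocalMin (g - f) x := neg_sub f g ▸ hmax.neg
  exact sub_nonneg.mp (Lop_sub hg hf ▸ Lop_nonneg_of_isLocalMin ha (hg.sub hf) hmin)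

end Lop

section Radial

variable {d : ℕ} {a : Euc d → Matrix (Fin d) (Fin d) ℝ} {b : Euc d → Euc d} {F F₁ : ℝ → ℝ}
  {F₂ : ℝ} {x z : Euc d}

lemma pd_comp_dist {F' : ℝ} (j : Fin d) (hx : x ≠ z) (hF : HasDerivAt F F' (dist x z)) :
    pd (fun y => F (dist y z)) j x = F' * ((x j - z j) / dist x z) := by
  have hdist : HasFDerivAt (fun y => dist y z)
      ((1 / (2 * √(‖x - z‖ ^ 2))) • 2 • innerSL ℝ (x - z)) x := by
    have hsq : HasFDerivAt (fun y => ‖y - z‖ ^ 2) (2 • innerSL ℝ (x - z)) x :=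
      ((hasFDerivAt_id x).sub_const z).norm_sq
    have hne : ‖x - z‖ ^ 2 ≠ 0 := by simpa [sub_eq_zero] using hx
    simpa [Real.sqrt_sq, dist_eq_norm] using hsq.sqrt hne
  have hcomp := hF.comp_hasFDerivAt x hdist
  unfold pd
  rw [show (fun y => F (dist y z)) = F ∘ fun y => dist y z from rfl, hcomp.fderiv]
  simp only [smul_apply, innerSL_apply_apply, EuclideanSpace.inner_single_right, PiLp.sub_apply,
    conj_trivial, one_mul, Real.sqrt_sq (norm_nonneg _), dist_eq_norm, smul_eq_mul, nsmul_eq_mul]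
  field_simp
  norm_num

lemma pd2_comp_dist (i j : Fin d) (hx : x ≠ z) (hF : ∀ s > 0, HasDerivAt F (F₁ s) s)
    (hF₁ : HasDerivAt F₁ F₂ (dist x z)) :
    pd2 (fun y => F (dist y z)) i j x =
      (F₂ - F₁ (dist x z) / dist x z) / dist x z ^ 2 * ((x i - z i) * (x j - z j)) +
        F₁ (dist x z) / dist x z * if i = j then 1 else 0 := by
  have hr : dist x z ≠ 0 := dist_ne_zero.mpr hx
  have hpd : (fun y => pd (fun y => F (dist y z)) j y) =ᶠ[𝓝 x]
      fun y => F₁ (dist y z) / dist y z * (y j - z j) := by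
    filter_upwards [isOpen_ne.mem_nhds hx] with y hy
    rw [pd_comp_dist j hy (hF _ (dist_pos.mpr hy))]
    ring
  have hquot : HasDerivAt (fun s => F₁ s / s)
      ((F₂ * dist x z - F₁ (dist x z) * 1) / dist x z ^ 2) (dist x z) :=
    hF₁.div (hasDerivAt_id _) hr
  have hdist : DifferentiableAt ℝ (fun y => dist y z) x :=
    differentiableAt_id.dist ℝ (differentiableAt_const z) hx
  have hradial : DifferentiableAt ℝ (fun y => F₁ (dist y z) / dist y z) x :=
    hquot.differentiableAt.comp (f := fun y => dist y z) x hdist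
  have hcoord : HasFDerivAt (fun y : Euc d => y j - z j)
      (EuclideanSpace.proj j : Euc d →L[ℝ] ℝ) x :=
    (EuclideanSpace.proj j : Euc d →L[ℝ] ℝ).hasFDerivAt.sub_const (z j)
  have hpdquot := pd_comp_dist i hx hquot
  unfold pd at hpdquot
  unfold pd2
  rw [hpd.fderiv_eq, (hradial.hasFDerivAt.fun_mul hcoord).fderiv]
  simp only [add_apply, smul_apply, smul_eq_mul, hpdquot, PiLp.proj_apply, PiLp.single_apply,
    eq_comm (a := j)]
  field_simp
  ring

lemma Lop_comp_dist (hx : x ≠ z) (hF : ∀ s > 0, HasDerivAt F (F₁ s) s)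
    (hF₁ : HasDerivAt F₁ F₂ (dist x z)) :
    Lop a b (fun y => F (dist y z)) x =
      (F₂ - F₁ (dist x z) / dist x z) / dist x z ^ 2 * quadForm (a x) (x - z) +
        F₁ (dist x z) / dist x z * ((a x).trace + inner ℝ (b x) (x - z)) := by
  simp only [Lop, pd2_comp_dist _ _ hx hF hF₁, pd_comp_dist _ hx (hF _ (dist_pos.mpr hx)),
    quadForm, Matrix.trace, Matrix.diag_apply, PiLp.inner_apply, PiLp.sub_apply, mul_add,
    Finset.sum_add_distrib, Finset.mul_sum, mul_ite, mul_one, mul_zero, Finset.sum_ite_eq,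
    Finset.mem_univ, if_true, add_assoc]
  congr 1
  · refine Finset.sum_congr rfl fun i _ => Finset.sum_congr rfl fun j _ => by ring
  congr 1
  · refine Finset.sum_congr rfl fun i _ => by ring
  · refine Finset.sum_congr rfl fun i _ => ?_
    simp only [RCLike.inner_apply, conj_trivial]
    ring

end Radial

section Barrier

/-- The profile `r ^ (-B) * exp (-θ r)` of the radial barriers, in exponential form. Only its values
at `r > 0` are meaningful: at `r = 0` the convention `log 0 = 0` makes it equal to `1`. -/
def barrierProfile (θ B r : ℝ) : ℝ := Real.exp (-(θ * r + B * Real.log r))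

variable {θ B : ℝ}

lemma barrierProfile_pos (θ B r : ℝ) : 0 < barrierProfile θ B r := Real.exp_pos _

lemma barrierProfile_mul_barrierProfile (θ B θ' B' r : ℝ) :
    barrierProfile θ B r * barrierProfile θ' B' r = barrierProfile (θ + θ') (B + B') r := by
  rw [barrierProfile, barrierProfile, barrierProfile, ← Real.exp_add]
  ring_nf

lemma hasDerivAt_barrierProfile {r : ℝ} (hr : r ≠ 0) :
    HasDerivAt (barrierProfile θ B) (-(θ + B / r) * barrierProfile θ B r) r := by
  have hexponent : HasDerivAt (fun s => -(θ * s + B * Real.log s)) (-(θ * 1 + B * r⁻¹)) r :=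
    (((hasDerivAt_id r).const_mul θ).add ((Real.hasDerivAt_log hr).const_mul B)).neg
  exact hexponent.exp.congr_deriv (by rw [barrierProfile]; ring)

lemma hasDerivAt_neg_slope_mul_barrierProfile {r : ℝ} (hr : r ≠ 0) :
    HasDerivAt (fun s => -(θ + B / s) * barrierProfile θ B s)
      (((θ + B / r) ^ 2 + B / r ^ 2) * barrierProfile θ B r) r := by
  have hslope : HasDerivAt (fun s => -(θ + B / s)) (B / r ^ 2) r := by
    simpa [div_eq_mul_inv] using (((hasDerivAt_inv hr).const_mul B).const_add θ).fun_neg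
  exact (hslope.mul (hasDerivAt_barrierProfile hr)).congr_deriv (by ring)

lemma tendsto_barrierProfile_atTop (hθ : 0 < θ) (hB : 0 ≤ B) :
    Tendsto (barrierProfile θ B) atTop (𝓝 0) := by
  refine Real.tendsto_exp_neg_atTop_nhds_zero.comp ?_
  exact (tendsto_id.const_mul_atTop hθ).atTop_add_zero_eventuallyLE
    ((eventually_ge_atTop 1).mono fun r hr => mul_nonneg hB (Real.log_nonneg hr))

lemma exists_exp_neg_mul_le_barrierProfile {Θ : ℝ} (hB : 0 ≤ B) (hθ : θ < Θ) :
    ∃ C > 0, ∀ r > 0, Real.exp (-(Θ * r)) ≤ C * barrierProfile θ B r := by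
  obtain ⟨τ, hτ, hBτ⟩ : ∃ τ > 0, B * τ ≤ Θ - θ :=
    ⟨(Θ - θ) / (B + 1), div_pos (sub_pos.mpr hθ) (by linarith), by
      rw [mul_div_left_comm]
      exact mul_le_of_le_one_right (sub_nonneg.mpr hθ.le)
        ((div_le_one (by linarith)).mpr (by linarith))⟩
  refine ⟨Real.exp (B * (-1 - Real.log τ)), Real.exp_pos _, fun r hr => ?_⟩
  have hlog : Real.log r ≤ τ * r - 1 - Real.log τ := by
    have := Real.log_le_sub_one_of_pos (mul_pos hτ hr)
    rw [Real.log_mul hτ.ne' hr.ne'] at this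
    linarith
  rw [barrierProfile, ← Real.exp_add, Real.exp_le_exp]
  nlinarith [mul_le_mul_of_nonneg_left hlog hB, mul_le_mul_of_nonneg_right hBτ hr.le]

/-- The radial barrier `|x - z| ^ (-B) * exp (-θ |x - z|)`, whose value at the centre `z` is
meaningless. The power is chosen so as to absorb the trace term of the operator. -/
def barrier {X : Type*} [Dist X] (θ B : ℝ) (z x : X) : ℝ := barrierProfile θ B (dist x z)

lemma barrier_pos {X : Type*} [Dist X] (θ B : ℝ) (z x : X) : 0 < barrier θ B z x :=
  barrierProfile_pos θ B _

lemma tendsto_barrier_cocompact {X : Type*} [PseudoMetricSpace X] [ProperSpace X] (z : X)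
    (hθ : 0 < θ) (hB : 0 ≤ B) : Tendsto (barrier θ B z) (cocompact X) (𝓝 0) :=
  (tendsto_barrierProfile_atTop hθ hB).comp (tendsto_dist_right_cocompact_atTop z)

lemma barrier_eq_barrier_mul_barrier {X : Type*} [Dist X] (θ θ' B : ℝ) (z x : X) :
    barrier θ' B z x = barrier (θ' - θ) 0 z x * barrier θ B z x := by
  simp only [barrier, barrierProfile_mul_barrierProfile, sub_add_cancel, zero_add]

lemma exists_exp_neg_norm_le_mul_barrier {E : Type*} [SeminormedAddCommGroup E] {Θ : ℝ}
    (hΘ : 0 ≤ Θ) (hB : 0 ≤ B) (hθ : θ < Θ) (z : E) :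
    ∃ C > 0, ∀ x, 0 < dist x z → Real.exp (-(Θ * ‖x‖)) ≤ C * barrier θ B z x := by
  obtain ⟨C, hC, hprofile⟩ := exists_exp_neg_mul_le_barrierProfile hB hθ
  refine ⟨Real.exp (Θ * ‖z‖) * C, by positivity, fun x hx => ?_⟩
  have hdist : dist x z ≤ ‖x‖ + ‖z‖ := dist_le_norm_add_norm x z
  calc Real.exp (-(Θ * ‖x‖)) ≤ Real.exp (Θ * ‖z‖) * Real.exp (-(Θ * dist x z)) := by
        rw [← Real.exp_add, Real.exp_le_exp]
        nlinarith
    _ ≤ Real.exp (Θ * ‖z‖) * (C * barrier θ B z x) := by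
        gcongr
        exact hprofile _ hx
    _ = Real.exp (Θ * ‖z‖) * C * barrier θ B z x := (mul_assoc ..).symm

lemma contDiffAt_barrier {E : Type*} [NormedAddCommGroup E] [InnerProductSpace ℝ E] {n : ℕ∞}
    {x z : E} (hx : x ≠ z) : ContDiffAt ℝ n (barrier θ B z) x := by
  have hdist : ContDiffAt ℝ n (fun y => dist y z) x := contDiffAt_id.dist ℝ contDiffAt_const hx
  exact ((contDiffAt_const.mul hdist).add
    (contDiffAt_const.mul (hdist.log (dist_ne_zero.mpr hx)))).neg.exp

end Barrier

section Elliptic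

variable {d : ℕ} {a : Euc d → Matrix (Fin d) (Fin d) ℝ} {b : Euc d → Euc d} {η B M : ℝ}

/-- Uniform bounds on the coefficients of `Lop a b`: ellipticity constant `η`, drift at most `M`,
and trace of the diffusion matrix at most `η * B`, where `B` is then the exponent that makes
`barrier θ B` a subsolution. -/
structure EllipticBounds (a : Euc d → Matrix (Fin d) (Fin d) ℝ) (b : Euc d → Euc d)
    (η B M : ℝ) : Prop where
  η_pos : 0 < η
  B_nonneg : 0 ≤ B
  elliptic : ∀ x ξ, η * ‖ξ‖ ^ 2 ≤ quadForm (a x) ξ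
  trace_le : ∀ x, (a x).trace ≤ η * B
  norm_drift_le : ∀ x, ‖b x‖ ≤ M

namespace EllipticBounds

lemma quadForm_nonneg (h : EllipticBounds a b η B M) (x ξ : Euc d) : 0 ≤ quadForm (a x) ξ :=
  (mul_nonneg h.η_pos.le (sq_nonneg _)).trans (h.elliptic x ξ)

lemma le_Lop_barrier (h : EllipticBounds a b η B M) {θ : ℝ} {x z : Euc d} (hθ : 0 ≤ θ)
    (hM : M ≤ η * θ) (hx : x ≠ z) :
    θ * (η * θ - M) * barrier θ B z x ≤ Lop a b (barrier θ B z) x := by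
  obtain ⟨hη, hB, hell, htr, hb⟩ := h
  have hLop := Lop_comp_dist (a := a) (b := b) hx
    (fun s hs => hasDerivAt_barrierProfile (θ := θ) (B := B) hs.ne')
    (hasDerivAt_neg_slope_mul_barrierProfile (dist_ne_zero.mpr hx))
  have hr : 0 < dist x z := dist_pos.mpr hx
  have hquad : η * dist x z ^ 2 ≤ quadForm (a x) (x - z) := dist_eq_norm x z ▸ hell x (x - z)
  have hdrift : inner ℝ (b x) (x - z) ≤ M * dist x z := by
    rw [dist_eq_norm]
    exact (real_inner_le_norm _ _).trans (by gcongr; exact hb x)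
  change _ ≤ Lop a b (fun y => barrierProfile θ B (dist y z)) x
  rw [hLop, barrier]
  set r := dist x z
  set σ := θ + B / r with hσ
  set P := barrierProfile θ B r
  have hP : 0 < P := barrierProfile_pos θ B r
  have hBr : 0 ≤ B / r := by positivity
  have : 0 ≤ σ := by positivity
  calc θ * (η * θ - M) * P
      ≤ σ * (η * θ - M) * P := by gcongr; linarith
    _ ≤ ((σ ^ 2 + B / r ^ 2 + σ / r) / r ^ 2 * (η * r ^ 2) - σ / r * (η * B + M * r)) * P := by
        gcongr
        have hextra : 0 ≤ η * (B / r ^ 2 + σ / r) := by positivity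
        have hidentity : σ * (η * θ - M) + η * (B / r ^ 2 + σ / r) =
            (σ ^ 2 + B / r ^ 2 + σ / r) / r ^ 2 * (η * r ^ 2) - σ / r * (η * B + M * r) := by
          rw [hσ]
          field_simp
          ring
        linarith
    _ ≤ ((σ ^ 2 + B / r ^ 2 + σ / r) / r ^ 2 * quadForm (a x) (x - z) -
          σ / r * ((a x).trace + inner ℝ (b x) (x - z))) * P := by
        gcongr
        exact htr x
    _ = _ := by ring

end EllipticBounds

end Elliptic

/-- A positive `C²` function `φ` on `ℝ^d` with `𝓛φ + Vφ ≤ lam φ`: the competitors in the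
definition of the generalized principal eigenvalue. -/
structure IsPosSupersolution (a : Euc d → Matrix (Fin d) (Fin d) ℝ) (b : Euc d → Euc d)
    (V : Euc d → ℝ) (lam : ℝ) (φ : Euc d → ℝ) : Prop where
  contDiff : ContDiff ℝ 2 φ
  pos : ∀ x, 0 < φ x
  Lop_add_le : ∀ x, Lop a b φ x + V x * φ x ≤ lam * φ x

section MaximumPrinciple

lemma ne_of_mem_compl_ball {X : Type*} [PseudoMetricSpace X] {x z : X} {ρ : ℝ} (hρ : 0 < ρ)
    (hx : x ∈ (ball z ρ)ᶜ) : x ≠ z := by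
  rintro rfl
  exact hx (mem_ball_self hρ)

lemma frontier_compl_ball_subset_sphere {X : Type*} [PseudoMetricSpace X] (z : X) (ρ : ℝ) :
    frontier (ball z ρ)ᶜ ⊆ sphere z ρ :=
  frontier_compl (ball z ρ) ▸ frontier_ball_subset_sphere

lemma exists_isLocalMax_of_pos {X : Type*} [TopologicalSpace X] {s : Set X} {f g : X → ℝ} {y : X}
    (hs : IsClosed s) (hf : ContinuousOn f s) (hfr : ∀ x ∈ frontier s, f x ≤ 0)
    (hg : Tendsto g (cocompact X) (𝓝 0)) (hfg : ∀ x ∈ s, f x ≤ g x) (hy : y ∈ s) (hfy : 0 < f y) :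
    ∃ x ∈ s, 0 < f x ∧ IsLocalMax f x := by
  have hev : ∀ᶠ x in cocompact X ⊓ 𝓟 s, f x ≤ f y := by
    rw [eventually_inf_principal]
    filter_upwards [hg.eventually (gt_mem_nhds hfy)] with x hx hxs using (hfg x hxs).trans hx.le
  obtain ⟨x, hx, hmax⟩ := hf.exists_isMaxOn' hs hy hev
  have hfx : 0 < f x := hfy.trans_le (hmax hy)
  have hint : s ∈ 𝓝 x := by
    by_contra hnot
    exact hfx.not_ge (hfr x ⟨subset_closure hx, mt mem_interior_iff_mem_nhds.mp hnot⟩)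
  exact ⟨x, hx, hfx, hmax.isLocalMax hint⟩

variable {d : ℕ} {a : Euc d → Matrix (Fin d) (Fin d) ℝ} {b : Euc d → Euc d} {s : Set (Euc d)}

lemma comparison_principle {φ ψ : Euc d → ℝ} {Γ : ℝ} (hs : IsClosed s)
    (ha : ∀ x ∈ s, ∀ ξ, 0 ≤ quadForm (a x) ξ) (hΓ : 0 ≤ Γ)
    (hφ : ∀ x ∈ s, ContDiffAt ℝ 2 φ x) (hφ_nonneg : ∀ x ∈ s, 0 ≤ φ x)
    (hLφ : ∀ x ∈ s, Lop a b φ x ≤ Γ * φ x) (hψ : ∀ x ∈ s, ContDiffAt ℝ 2 ψ x)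
    (hψ_lim : Tendsto ψ (cocompact (Euc d)) (𝓝 0)) (hLψ : ∀ x ∈ s, Γ * ψ x < Lop a b ψ x)
    (hfr : ∀ x ∈ frontier s, ψ x ≤ φ x) : ∀ x ∈ s, ψ x ≤ φ x := by
  intro y hy
  by_contra! hlt
  have hcont : ContinuousOn (ψ - φ) s := fun x hx =>
    ((hψ x hx).continuousAt.sub (hφ x hx).continuousAt).continuousWithinAt
  obtain ⟨x, hx, hpos, hmax⟩ := exists_isLocalMax_of_pos hs hcont
    (fun x hx => sub_nonpos.mpr (hfr x hx)) hψ_lim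
    (fun x hx => sub_le_self _ (hφ_nonneg x hx)) hy (sub_pos.mpr hlt)
  have hL := Lop_le_Lop_of_isLocalMax_sub (b := b) (ha x hx) (hψ x hx) (hφ x hx) hmax
  have hΓle : Γ * φ x ≤ Γ * ψ x := mul_le_mul_of_nonneg_left (sub_pos.mp hpos).le hΓ
  linarith [hLφ x hx, hLψ x hx]

lemma isLocalMax_sub_smul_of_isLocalMax_div {X : Type*} [TopologicalSpace X] {w φ : X → ℝ} {x : X}
    (hφ : ∀ y, 0 < φ y) (hmax : IsLocalMax (w / φ) x) :
    IsLocalMax (w - (w x / φ x) • φ) x := by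
  filter_upwards [hmax] with y hy
  have hle : w y ≤ w x / φ x * φ y := (div_le_iff₀ (hφ y)).mp hy
  simpa [div_mul_cancel₀ _ (hφ x).ne'] using hle

lemma IsPosSupersolution.refined_maximum_principle {w φ g V : Euc d → ℝ} {lam : ℝ}
    (hφ : IsPosSupersolution a b V lam φ) (hs : IsClosed s)
    (ha : ∀ x ∈ s, ∀ ξ, 0 ≤ quadForm (a x) ξ) (hw : ∀ x ∈ s, ContDiffAt ℝ 2 w x)
    (hLw : ∀ x ∈ s, lam * w x < Lop a b w x + V x * w x)
    (hfr : ∀ x ∈ frontier s, w x ≤ 0) (hg : Tendsto g (cocompact (Euc d)) (𝓝 0))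
    (hwg : ∀ x ∈ s, w x / φ x ≤ g x) : ∀ x ∈ s, w x ≤ 0 := by
  intro y hy
  by_contra! hpos
  have hcont : ContinuousOn (w / φ) s :=
    ContinuousOn.div (fun x hx => (hw x hx).continuousAt.continuousWithinAt)
      hφ.contDiff.continuous.continuousOn fun x _ => (hφ.pos x).ne'
  obtain ⟨x, hx, hquot, hmax⟩ := exists_isLocalMax_of_pos hs hcont
    (fun x hx => div_nonpos_of_nonpos_of_nonneg (hfr x hx) (hφ.pos x).le) hg hwg hy
    (div_pos hpos (hφ.pos y))
  have hφx : ContDiffAt ℝ 2 φ x := hφ.contDiff.contDiffAt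
  set t := w x / φ x
  have hwx : w x = t * φ x := (div_mul_cancel₀ _ (hφ.pos x).ne').symm
  have hL : Lop a b w x ≤ t * Lop a b φ x := by
    rw [← Lop_const_smul t hφx]
    exact Lop_le_Lop_of_isLocalMax_sub (ha x hx) (hw x hx) (hφx.const_smul t)
      (isLocalMax_sub_smul_of_isLocalMax_div hφ.pos hmax)
  have hlt := hLw x hx
  rw [hwx] at hlt
  linarith [mul_le_mul_of_nonneg_left (hφ.Lop_add_le x) (show 0 ≤ t from hquot.le)]

end MaximumPrinciple

section Decay

variable {d : ℕ} {a : Euc d → Matrix (Fin d) (Fin d) ℝ} {b : Euc d → Euc d} {V : Euc d → ℝ}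
  {η B M γ lam : ℝ} {φ u : Euc d → ℝ} {z : Euc d}

lemma exists_isPosSupersolution_of_lamStar_lt (hV : ∀ x, V x ≤ γ)
    (hlam : lamStar a b V univ < lam) : ∃ φ, IsPosSupersolution a b V lam φ := by
  have hone : γ ∈ supersolutions a b V univ :=
    ⟨1, fun _ _ => one_pos, contDiffOn_const, fun x _ => by simpa [Lop, pd, pd2] using hV x⟩
  obtain ⟨μ, ⟨φ, hpos, hC2, hsuper⟩, hμ⟩ := exists_lt_of_csInf_lt ⟨γ, hone⟩ hlam
  refine ⟨φ, contDiffOn_univ.mp hC2, fun x => hpos x (mem_univ x), fun x => ?_⟩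
  exact (hsuper x (mem_univ x)).trans
    (mul_le_mul_of_nonneg_right hμ.le (hpos x (mem_univ x)).le)

lemma EllipticBounds.mul_lt_Lop_add_smul_barrier (h : EllipticBounds a b η B M) {θ K s : ℝ}
    {x : Euc d} (hV : -γ ≤ V x) (hlam : 0 ≤ lam) (hθ : 0 ≤ θ) (hM : M ≤ η * θ) (hs : 0 ≤ s)
    (hgap : lam * (K + s) < s * (θ * (η * θ - M) - γ)) (hu : ContDiffAt ℝ 2 u x)
    (hLu : 0 ≤ Lop a b u x + V x * u x) (hx : x ≠ z) (hux : u x ≤ K * barrier θ B z x) :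
    lam * (u + s • barrier θ B z) x <
      Lop a b (u + s • barrier θ B z) x + V x * (u + s • barrier θ B z) x := by
  have hP := barrier_pos θ B z x
  have hC2 : ContDiffAt ℝ 2 (barrier θ B z) x := contDiffAt_barrier hx
  have hsC2 : ContDiffAt ℝ 2 (s • barrier θ B z) x := hC2.const_smul s
  rw [Lop_add hu hsC2, Lop_const_smul s hC2]
  simp only [Pi.add_apply, Pi.smul_apply, smul_eq_mul]
  calc lam * (u x + s * barrier θ B z x)
      ≤ lam * ((K + s) * barrier θ B z x) := by
        gcongr
        linarith
    _ < s * (θ * (η * θ - M) - γ) * barrier θ B z x := by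
        rw [← mul_assoc]
        gcongr
    _ ≤ s * (Lop a b (barrier θ B z) x + V x * barrier θ B z x) := by
        rw [mul_assoc]
        gcongr
        linarith [h.le_Lop_barrier hθ hM hx, mul_le_mul_of_nonneg_right hV hP.le]
    _ ≤ _ := by linarith

namespace IsPosSupersolution

lemma exists_mul_barrier_le (hφ : IsPosSupersolution a b V lam φ) (h : EllipticBounds a b η B M)
    (hV : ∀ x, -γ ≤ V x) (hγ : 0 ≤ γ + lam) {θ ρ : ℝ} (hθ : 0 < θ)
    (hrate : γ + lam < θ * (η * θ - M)) (hρ : 0 < ρ) (z : Euc d) :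
    ∃ c > 0, ∀ x ∈ (ball z ρ)ᶜ, c * barrier θ B z x ≤ φ x := by
  obtain ⟨y, -, hmin⟩ := (isCompact_closedBall z ρ).exists_isMinOn
    (nonempty_closedBall.mpr hρ.le) hφ.contDiff.continuous.continuousOn
  set c := φ y / barrierProfile θ B ρ with hc
  have hc_pos : 0 < c := div_pos (hφ.pos y) (barrierProfile_pos θ B ρ)
  have hM : M ≤ η * θ := sub_nonneg.mp (pos_of_mul_pos_right (hγ.trans_lt hrate) hθ.le).le
  have hLbarrier : ∀ x ∈ (ball z ρ)ᶜ,
      (γ + lam) * (c • barrier θ B z) x < Lop a b (c • barrier θ B z) x := fun x hx => by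
    have hxz := ne_of_mem_compl_ball hρ hx
    rw [Lop_const_smul c (contDiffAt_barrier hxz), Pi.smul_apply, smul_eq_mul, mul_left_comm]
    gcongr
    exact (mul_lt_mul_of_pos_right hrate (barrier_pos θ B z x)).trans_le
      (h.le_Lop_barrier hθ.le hM hxz)
  refine ⟨c, hc_pos, comparison_principle (a := a) (b := b) isOpen_ball.isClosed_compl
    (fun x _ => h.quadForm_nonneg x) hγ (fun x _ => hφ.contDiff.contDiffAt)
    (fun x _ => (hφ.pos x).le) (fun x _ => ?_)
    (fun x hx => (contDiffAt_barrier (ne_of_mem_compl_ball hρ hx)).const_smul c)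
    (by simpa using (tendsto_barrier_cocompact z hθ h.B_nonneg).const_smul c) hLbarrier
    fun x hx => ?_⟩
  · linarith [hφ.Lop_add_le x, mul_le_mul_of_nonneg_right (hV x) (hφ.pos x).le]
  · have hx : dist x z = ρ := frontier_compl_ball_subset_sphere z ρ hx
    calc c * barrier θ B z x = φ y := by
          rw [barrier, hx, hc, div_mul_cancel₀ _ (barrierProfile_pos θ B ρ).ne']
      _ ≤ φ x := hmin hx.le

lemma not_le_mul_barrier [NeZero d] (hφ : IsPosSupersolution a b V lam φ)
    (h : EllipticBounds a b η B M) (hV : ∀ x, -γ ≤ V x) (hγ : 0 ≤ γ + lam) {θ θ' : ℝ}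
    (hθ : 0 < θ) (hrate : γ + lam < θ * (η * θ - M)) (hθ' : θ < θ') (K : ℝ) :
    ¬ ∀ x ≠ z, φ x ≤ K * barrier θ' B z x := by
  intro hdecay
  obtain ⟨c, hc, hlower⟩ := hφ.exists_mul_barrier_le h hV hγ hθ hrate one_pos z
  have : NoncompactSpace (Euc d) := NormedSpace.noncompactSpace ℝ _
  have hlim : Tendsto (fun x => K * barrier (θ' - θ) 0 z x) (cocompact (Euc d)) (𝓝 0) := by
    simpa using (tendsto_barrier_cocompact z (sub_pos.mpr hθ') le_rfl).const_mul K
  have hfar : ∀ᶠ x in cocompact (Euc d), x ∈ (ball z 1)ᶜ :=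
    mem_of_superset (isCompact_closedBall z 1).compl_mem_cocompact
      (compl_subset_compl.mpr ball_subset_closedBall)
  obtain ⟨x, hsmall, hx⟩ := ((hlim.eventually (gt_mem_nhds hc)).and hfar).exists
  have hle := (hlower x hx).trans (hdecay x (ne_of_mem_compl_ball one_pos hx))
  rw [barrier_eq_barrier_mul_barrier θ θ', ← mul_assoc] at hle
  exact hsmall.not_ge (le_of_mul_le_mul_right hle (barrier_pos θ B z x))

lemma add_mul_barrier_nonpos (hφ : IsPosSupersolution a b V lam φ)
    (h : EllipticBounds a b η B M) (hV : ∀ x, -γ ≤ V x) (hγ : 0 ≤ γ + lam) (hlam : 0 ≤ lam)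
    {θ θ' ρ K s : ℝ} (hθ : 0 < θ) (hrate : γ + lam < θ * (η * θ - M)) (hθ' : θ < θ') (hρ : 0 < ρ)
    (hK : 0 ≤ K) (hs : 0 ≤ s) (hgap : lam * (K + s) < s * (θ' * (η * θ' - M) - γ))
    (hu : ContDiff ℝ 2 u) (hLu : ∀ x, 0 ≤ Lop a b u x + V x * u x)
    (hdecay : ∀ x ≠ z, u x ≤ K * barrier θ' B z x)
    (hsphere : ∀ x ∈ sphere z ρ, u x + s * barrier θ' B z x ≤ 0) :
    ∀ x ∈ (ball z ρ)ᶜ, u x + s * barrier θ' B z x ≤ 0 := by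
  obtain ⟨c, hc, hlower⟩ := hφ.exists_mul_barrier_le h hV hγ hθ hrate hρ z
  have hM : M ≤ η * θ' := by
    have : M < η * θ := sub_pos.mp (pos_of_mul_pos_right (hγ.trans_lt hrate) hθ.le)
    nlinarith [h.η_pos]
  refine hφ.refined_maximum_principle (w := u + s • barrier θ' B z)
    (g := fun x => (K + s) / c * barrier (θ' - θ) 0 z x)
    isOpen_ball.isClosed_compl (fun x _ => h.quadForm_nonneg x)
    (fun x hx => hu.contDiffAt.add
      ((contDiffAt_barrier (ne_of_mem_compl_ball hρ hx)).const_smul s))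
    (fun x hx => ?_) (fun x hx => hsphere x (frontier_compl_ball_subset_sphere z ρ hx))
    (by simpa using (tendsto_barrier_cocompact z (sub_pos.mpr hθ') le_rfl).const_mul _)
    fun x hx => ?_
  · exact h.mul_lt_Lop_add_smul_barrier (hV x) hlam (hθ.trans hθ').le hM hs hgap hu.contDiffAt
      (hLu x) (ne_of_mem_compl_ball hρ hx) (hdecay x (ne_of_mem_compl_ball hρ hx))
  · rw [div_le_iff₀ (hφ.pos x)]
    calc u x + s * barrier θ' B z x ≤ (K + s) * barrier θ' B z x := by
          linarith [hdecay x (ne_of_mem_compl_ball hρ hx)]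
      _ = (K + s) / c * barrier (θ' - θ) 0 z x * (c * barrier θ B z x) := by
          rw [barrier_eq_barrier_mul_barrier θ θ']
          field_simp
      _ ≤ (K + s) / c * barrier (θ' - θ) 0 z x * φ x := by
          have := barrier_pos (θ' - θ) 0 z x
          gcongr
          exact hlower x hx

end IsPosSupersolution

lemma neg_of_neg_of_decay (h : EllipticBounds a b η B M) (hγ : 0 ≤ γ) (hV : ∀ x, -γ ≤ V x)
    (hsuper : ∀ δ > 0, ∃ φ, IsPosSupersolution a b V δ φ) {θ θ' K : ℝ} (hθ : 0 < θ)
    (hrate : γ < θ * (η * θ - M)) (hθ' : θ < θ') (hK : 0 ≤ K) (hu : ContDiff ℝ 2 u)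
    (hLu : ∀ x, 0 ≤ Lop a b u x + V x * u x) (hdecay : ∀ x ≠ z, u x ≤ K * barrier θ' B z x)
    (hz : u z < 0) (x : Euc d) : u x < 0 := by
  obtain ⟨ρ, hρ, hball⟩ : ∃ ρ > 0, ∀ y ∈ closedBall z ρ, u y < u z / 2 :=
    nhds_basis_closedBall.eventually_iff.mp
      (hu.continuous.continuousAt.eventually (gt_mem_nhds (by linarith)))
  set s := -(u z / 2) / barrierProfile θ' B ρ with hs_def
  have hs : 0 < s := div_pos (by linarith) (barrierProfile_pos θ' B ρ)
  have hgap : 0 < s * (θ' * (η * θ' - M) - γ) := by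
    have : M < η * θ := sub_pos.mp (pos_of_mul_pos_right (hγ.trans_lt hrate) hθ.le)
    have hmono : θ * (η * θ - M) ≤ θ' * (η * θ' - M) := by
      have := h.η_pos
      gcongr
      linarith
    exact mul_pos hs (by linarith)
  obtain ⟨δ, ⟨hδ_gap, hδ_rate⟩, hδ⟩ :
      ∃ δ, (δ * (K + s) < s * (θ' * (η * θ' - M) - γ) ∧ γ + δ < θ * (η * θ - M)) ∧ 0 < δ := by
    have hgap_lim : Tendsto (fun δ => δ * (K + s)) (𝓝[>] 0) (𝓝 (0 * (K + s))) :=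
      (continuous_mul_const (K + s)).continuousWithinAt
    have hrate_lim : Tendsto (fun δ => γ + δ) (𝓝[>] 0) (𝓝 (γ + 0)) :=
      (continuous_const_add γ).continuousWithinAt
    exact (((hgap_lim.eventually (gt_mem_nhds (by simpa using hgap))).and
      (hrate_lim.eventually (gt_mem_nhds (by simpa using hrate)))).and
      self_mem_nhdsWithin).exists
  obtain ⟨φ, hφ⟩ := hsuper δ hδ
  by_cases hx : x ∈ ball z ρ
  · linarith [hball x (ball_subset_closedBall hx)]
  · have hle := hφ.add_mul_barrier_nonpos h hV (by linarith) hδ.le hθ hδ_rate hθ' hρ hK hs.le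
      hδ_gap hu hLu hdecay (fun y hy => ?_) x hx
    · linarith [mul_pos hs (barrier_pos θ' B z x)]
    · rw [barrier, mem_sphere.mp hy, hs_def, div_mul_cancel₀ _ (barrierProfile_pos θ' B ρ).ne']
      linarith [hball y (sphere_subset_closedBall hy)]

/-- The positive root of `η θ² - M θ - γ`, beyond which `exp (-θ |x|)` is essentially a strict
subsolution for every drift bounded by `M` and every potential bounded below by `-γ`. -/
def criticalRate (η M γ : ℝ) : ℝ := M / (2 * η) + √(M ^ 2 / (4 * η ^ 2) + γ / η)

lemma criticalRate_nonneg (hη : 0 ≤ η) (hM : 0 ≤ M) : 0 ≤ criticalRate η M γ := by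
  unfold criticalRate
  positivity

lemma lt_mul_sub_of_criticalRate_lt (hη : 0 < η) {θ : ℝ} (hθ : criticalRate η M γ < θ) :
    γ < θ * (η * θ - M) := by
  have hsqrt : √(M ^ 2 / (4 * η ^ 2) + γ / η) < θ - M / (2 * η) := lt_sub_iff_add_lt'.mpr hθ
  have hsq := (Real.sqrt_lt' ((Real.sqrt_nonneg _).trans_lt hsqrt)).mp hsqrt
  have hexpand : (θ - M / (2 * η)) ^ 2 = θ * (η * θ - M) / η + M ^ 2 / (4 * η ^ 2) := by
    field_simp
    ring
  rw [hexpand, add_comm, add_lt_add_iff_right] at hsq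
  exact (div_lt_div_iff_of_pos_right hη).mp hsq

lemma nonneg_of_decay [NeZero d] (h : EllipticBounds a b η B M) (hγ : 0 ≤ γ) (hV : ∀ x, -γ ≤ V x)
    (hsuper : ∀ δ > 0, ∃ φ, IsPosSupersolution a b V δ φ) (hu : ContDiff ℝ 2 u)
    (hsol : ∀ x, Lop a b u x + V x * u x = 0) {C Θ : ℝ} (hΘ : criticalRate η M γ < Θ)
    (hdecay : ∀ x, |u x| ≤ C * Real.exp (-(Θ * ‖x‖))) (z : Euc d) : 0 ≤ u z := by
  by_contra! hz
  have hcrit : 0 ≤ criticalRate η M γ :=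
    criticalRate_nonneg h.η_pos.le ((norm_nonneg _).trans (h.norm_drift_le 0))
  obtain ⟨θ', hθ', hθ'Θ⟩ := exists_between hΘ
  obtain ⟨θ, hθ, hθθ'⟩ := exists_between hθ'
  have hrate := lt_mul_sub_of_criticalRate_lt h.η_pos hθ
  obtain ⟨K, hK, hexp⟩ :=
    exists_exp_neg_norm_le_mul_barrier (hcrit.trans hΘ.le) h.B_nonneg hθ'Θ z
  have hC : 0 ≤ C := nonneg_of_mul_nonneg_left ((abs_nonneg _).trans (hdecay 0)) (Real.exp_pos _)
  have habs : ∀ x ≠ z, |u x| ≤ C * K * barrier θ' B z x := fun x hx => by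
    rw [mul_assoc]
    exact (hdecay x).trans (mul_le_mul_of_nonneg_left (hexp x (dist_pos.mpr hx)) hC)
  have hneg := neg_of_neg_of_decay h hγ hV hsuper (hcrit.trans_lt hθ) hrate hθθ' (by positivity)
    hu (fun x => (hsol x).ge) (fun x hx => (le_abs_self _).trans (habs x hx)) hz
  have hsuper_neg : IsPosSupersolution a b V 0 (-u) :=
    ⟨hu.neg, fun x => neg_pos.mpr (hneg x), fun x => by
      rw [Lop_neg hu.contDiffAt, Pi.neg_apply]
      linarith [hsol x]⟩
  exact hsuper_neg.not_le_mul_barrier h hV (by simpa using hγ) (hcrit.trans_lt hθ)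
    (by simpa using hrate) hθθ' (C * K) fun x hx => (neg_le_abs _).trans (habs x hx)

end Decay

section Trace

variable {d : ℕ} (m : Matrix (Fin d) (Fin d) ℝ)

lemma abs_apply_le_frob (i j : Fin d) : |m i j| ≤ frob m := by
  refine Real.abs_le_sqrt ?_
  calc m i j ^ 2 ≤ ∑ l, m i l ^ 2 :=
        Finset.single_le_sum (fun l _ => sq_nonneg (m i l)) (Finset.mem_univ j)
    _ ≤ ∑ k, ∑ l, m k l ^ 2 :=
        Finset.single_le_sum (f := fun k => ∑ l, m k l ^ 2)
          (fun k _ => Finset.sum_nonneg fun l _ => sq_nonneg _) (Finset.mem_univ i)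

lemma trace_le_mul_frob : m.trace ≤ d * frob m := by
  simpa [Matrix.trace] using
    Finset.sum_le_sum fun i (_ : i ∈ Finset.univ) => (le_abs_self _).trans (abs_apply_le_frob m i i)

lemma ellipticBounds_of_frob_le {a : Euc d → Matrix (Fin d) (Fin d) ℝ} {b : Euc d → Euc d}
    {η M A : ℝ} (hη : 0 < η) (hell : ∀ x ξ, η * ‖ξ‖ ^ 2 ≤ quadForm (a x) ξ)
    (ha : ∀ x, frob (a x) ≤ A) (hb : ∀ x, ‖b x‖ ≤ M) : EllipticBounds a b η (d * A / η) M where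
  η_pos := hη
  B_nonneg := div_nonneg (mul_nonneg d.cast_nonneg ((Real.sqrt_nonneg _).trans (ha 0))) hη.le
  elliptic := hell
  trace_le x := by
    rw [mul_div_cancel₀ _ hη.ne']
    exact (trace_le_mul_frob _).trans (by gcongr; exact ha x)
  norm_drift_le := hb

end Trace

theorem statement16_general {d : ℕ} [NeZero d] {a : Euc d → Matrix (Fin d) (Fin d) ℝ}
    {b : Euc d → Euc d} {V u : Euc d → ℝ} {η B M γ C Θ : ℝ} (h : EllipticBounds a b η B M)
    (hV : ∀ x, |V x| ≤ γ) (hlam : lamStar a b V univ ≤ 0) (hu : ContDiff ℝ 2 u)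
    (hsol : ∀ x, Lop a b u x + V x * u x = 0) (hΘ : criticalRate η M γ < Θ)
    (hdecay : ∀ x, |u x| ≤ C * Real.exp (-(Θ * ‖x‖))) (x : Euc d) : u x = 0 := by
  have hγ : 0 ≤ γ := (abs_nonneg _).trans (hV 0)
  have hV_lower : ∀ x, -γ ≤ V x := fun x => (abs_le.mp (hV x)).1
  have hsuper : ∀ δ > 0, ∃ φ, IsPosSupersolution a b V δ φ := fun δ hδ =>
    exists_isPosSupersolution_of_lamStar_lt (fun x => (abs_le.mp (hV x)).2) (hlam.trans_lt hδ)
  have hsol_neg : ∀ x, Lop a b (-u) x + V x * (-u) x = 0 := fun x => by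
    rw [Lop_neg hu.contDiffAt, Pi.neg_apply]
    linarith [hsol x]
  have hnonneg := nonneg_of_decay h hγ hV_lower hsuper hu hsol hΘ hdecay x
  have hnonpos := nonneg_of_decay h hγ hV_lower hsuper hu.neg hsol_neg hΘ
    (fun x => by simpa using hdecay x) x
  exact le_antisymm (neg_nonneg.mp hnonpos) hnonneg

/-- Theorem 4.2: Landis-type theorem under the assumption `λ*(𝓛,V) ≤ 0`. -/
theorem statement16 {d : ℕ} (hd : 1 ≤ d)
    (a : Euc d → Matrix (Fin d) (Fin d) ℝ) (b : Euc d → Euc d)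
    (hposdef : ∀ x, (a x).PosDef)
    (haLip : ∀ R > 0, ∃ C > 0, ∀ x y : Euc d, ‖x‖ ≤ R → ‖y‖ ≤ R →
      frob (a x - a y) ≤ C * ‖x - y‖)
    (habdd : ∃ Ca, ∀ x, frob (a x) ≤ Ca)
    (η₀ : ℝ) (hη : 0 < η₀)
    (hellip : ∀ x : Euc d, ∀ ξ : Euc d, η₀ * ‖ξ‖ ^ 2 ≤ quadForm (a x) ξ)
    (hbMeas : Measurable b)
    (V : Euc d → ℝ) (hVmeas : Measurable V)
    (M γ : ℝ) (hbM : ∀ x : Euc d, ‖b x‖ ≤ M) (hVγ : ∀ x : Euc d, |V x| ≤ γ)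
    (hlam : lamStar a b V Set.univ ≤ 0)
    (u : Euc d → ℝ) (huC2 : ContDiff ℝ 2 u)
    (hsol : ∀ x, Lop a b u x + V x * u x = 0)
    (ε Cε : ℝ) (hε : 0 < ε) (hCε : 0 < Cε)
    (hdecay : ∀ x : Euc d, |u x| ≤ Cε * Real.exp
      (-((M / (2 * η₀) + Real.sqrt (M ^ 2 / (4 * η₀ ^ 2) + γ / η₀) + ε) * ‖x‖))) :
    ∀ x, u x = 0 := by
  have : NeZero d := ⟨by lia⟩
  obtain ⟨A, hA⟩ := habdd
  exact statement16_general (ellipticBounds_of_frob_le hη hellip hA hbM) hVγ hlam huC2 hsol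
    (lt_add_of_pos_right _ hε) hdecay
end
end

section
/- Let d ≥ 2 and let 𝓑 ⊂ ℝ^d be a closed ball centered at the origin. Let b : ℝ^d → ℝ^d and V : ℝ^d → ℝ be Borel measurable with sup|b| ≤ M and sup|V| ≤ γ, and suppose there exists r > 0 with 𝓑 ⊂ B_r (the open ball of radius r) such that b is constant and V is constant on the complement of B_r. Let u be a C² function on ℝ^d \ 𝓑 satisfying Δu + ⟨b, ∇u⟩ + Vu = 0 there, and suppose there are ε > 0 and C_ε > 0 such that |u(x)| ≤ C_ε exp(−(M/2 + √(M²/4 + γ) + ε)|x|) for all x ∈ ℝ^d \ 𝓑. Then u ≡ 0 on ℝ^d \ 𝓑. -/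
open Metric Set Filter

noncomputable section

/-!
Multiply a Pohozaev field `2⟨x,∇w⟩∇w - |∇w|² x + q w∇w + g w² x` by a Carleman weight `α(|x|)`. For
suitable radial `q` and `g` its divergence is nonnegative, so if its flux through large spheres
tends to `0`, its flux through every sphere is nonpositive. On the other hand the weighted field `X`
satisfies `⟨x, X⟩ ≥ α (a w² - |x|²|∇w|²)`, and the parameters of the weight make `a` as large as one
likes; this forces `w = 0`.

Where the coefficients are constants `b₀` and `k`, the function `w = e^{⟨b₀,x⟩/2} u` solves
`Δw = (|b₀|²/4 - k) w`. The assumed decay of `u` lets the weight `r^{2c} e^{2κr}` with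
`κ = √(|b₀|²/4 - k)` (or `κ = 0`) be used for every `c`, so `u` vanishes near infinity. Given that,
the weight `e^{τ|x|²}` with `τ → ∞` applies to every function with `|Δu|² ≤ C (|∇u|² + u²)` and
gives `u = 0` up to the ball.
-/

section

open MeasureTheory

variable {d : ℕ}

lemma pd_congr {f g : Euc d → ℝ} {x : Euc d} (h : f =ᶠ[nhds x] g) (i : Fin d) :
    pd f i x = pd g i x := by
  rw [pd, pd, h.fderiv_eq]

lemma pd_eq_zero_of_eventuallyEq {f : Euc d → ℝ} {x : Euc d} (h : f =ᶠ[nhds x] fun _ => 0)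
    (i : Fin d) : pd f i x = 0 := by
  rw [pd_congr h]
  simp [pd]

lemma pd_add {f g : Euc d → ℝ} {x : Euc d} (hf : DifferentiableAt ℝ f x)
    (hg : DifferentiableAt ℝ g x) (i : Fin d) :
    pd (fun y => f y + g y) i x = pd f i x + pd g i x := by
  simp [pd, fderiv_fun_add hf hg]

lemma pd_sub {f g : Euc d → ℝ} {x : Euc d} (hf : DifferentiableAt ℝ f x)
    (hg : DifferentiableAt ℝ g x) (i : Fin d) :
    pd (fun y => f y - g y) i x = pd f i x - pd g i x := by
  simp [pd, fderiv_fun_sub hf hg]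

lemma pd_mul {f g : Euc d → ℝ} {x : Euc d} (hf : DifferentiableAt ℝ f x)
    (hg : DifferentiableAt ℝ g x) (i : Fin d) :
    pd (fun y => f y * g y) i x = f x * pd g i x + g x * pd f i x := by
  simp [pd, fderiv_fun_mul hf hg]

lemma pd_const_mul {f : Euc d → ℝ} {x : Euc d} (hf : DifferentiableAt ℝ f x) (c : ℝ)
    (i : Fin d) : pd (fun y => c * f y) i x = c * pd f i x := by
  simp [pd, fderiv_const_mul hf c]

lemma pd_sq {f : Euc d → ℝ} {x : Euc d} (hf : DifferentiableAt ℝ f x) (i : Fin d) :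
    pd (fun y => f y ^ 2) i x = 2 * f x * pd f i x := by
  simp [pd, fderiv_fun_pow 2 hf]

lemma pd_sum {ι : Type*} {s : Finset ι} {f : ι → Euc d → ℝ} {x : Euc d}
    (hf : ∀ j ∈ s, DifferentiableAt ℝ (f j) x) (i : Fin d) :
    pd (fun y => ∑ j ∈ s, f j y) i x = ∑ j ∈ s, pd (f j) i x := by
  simp [pd, fderiv_fun_sum hf]

lemma differentiableAt_coord (i : Fin d) (x : Euc d) :
    DifferentiableAt ℝ (fun y : Euc d => y i) x :=
  (EuclideanSpace.proj i : Euc d →L[ℝ] ℝ).differentiableAt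

lemma pd_coord (i j : Fin d) (x : Euc d) :
    pd (fun y => y j) i x = if i = j then 1 else 0 := by
  have h : HasFDerivAt (fun y : Euc d => y j) (EuclideanSpace.proj j : Euc d →L[ℝ] ℝ) x :=
    (EuclideanSpace.proj j : Euc d →L[ℝ] ℝ).hasFDerivAt
  rw [pd, h.fderiv]
  simp [eq_comm]

lemma differentiableAt_radial {φ : ℝ → ℝ} {x : Euc d} (hφ : DifferentiableAt ℝ φ ‖x‖)
    (hx : x ≠ 0) : DifferentiableAt ℝ (fun y : Euc d => φ ‖y‖) x :=
  hφ.comp x ((contDiffAt_norm ℝ hx (n := 1)).differentiableAt (by norm_num))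

lemma pd_radial {φ : ℝ → ℝ} {x : Euc d} (hφ : DifferentiableAt ℝ φ ‖x‖) (hx : x ≠ 0)
    (i : Fin d) : pd (fun y => φ ‖y‖) i x = deriv φ ‖x‖ / ‖x‖ * x i := by
  have hn : HasFDerivAt (fun y : Euc d => ‖y‖) (fderiv ℝ (fun y : Euc d => ‖y‖) x) x :=
    ((contDiffAt_norm ℝ hx (n := 1)).differentiableAt (by norm_num)).hasFDerivAt
  have hsq : 2 * x i =
      2 * ‖x‖ * fderiv ℝ (fun y : Euc d => ‖y‖) x (EuclideanSpace.single i 1) := by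
    have h := fderiv_fun_pow 2 hn.differentiableAt
    have h' := congrArg (fun L : Euc d →L[ℝ] ℝ => L (EuclideanSpace.single i 1)) h
    simpa [fderiv_norm_sq_apply, EuclideanSpace.inner_single_right] using h'
  have hcomp : fderiv ℝ (fun y : Euc d => φ ‖y‖) x = _ :=
    (hφ.hasDerivAt.comp_hasFDerivAt x hn).fderiv
  have hx' : ‖x‖ ≠ 0 := norm_ne_zero_iff.2 hx
  have hnorm : fderiv ℝ (fun y : Euc d => ‖y‖) x (EuclideanSpace.single i 1) = x i / ‖x‖ := by
    rw [eq_div_iff hx']; linarith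
  simp only [pd, hcomp, smul_apply, smul_eq_mul, hnorm]
  ring

lemma differentiableAt_pd {w : Euc d → ℝ} {x : Euc d} (hw : ContDiffAt ℝ 2 w x) (i : Fin d) :
    DifferentiableAt ℝ (pd w i) x :=
  ((hw.fderiv_right (m := 1) (by norm_num)).differentiableAt (by norm_num)).clm_apply
    (differentiableAt_const _)

lemma pd2_comm {w : Euc d → ℝ} {x : Euc d} (hw : ContDiffAt ℝ 2 w x) (i j : Fin d) :
    pd2 w i j x = pd2 w j i x := by
  have hd : DifferentiableAt ℝ (fderiv ℝ w) x :=
    (hw.fderiv_right (m := 1) (by norm_num)).differentiableAt (by norm_num)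
  have key : ∀ i j : Fin d, pd2 w i j x =
      fderiv ℝ (fderiv ℝ w) x (EuclideanSpace.single i 1) (EuclideanSpace.single j 1) := by
    intro i j
    unfold pd2 pd
    rw [fderiv_clm_apply hd (by fun_prop)]
    simp
  rw [key, key]
  exact (hw.isSymmSndFDerivAt (by simp)) _ _

/-- The Euler derivative `⟨x, ∇w⟩`, that is, `r ∂ᵣw`. -/
def euler (w : Euc d → ℝ) (x : Euc d) : ℝ := ∑ i, x i * pd w i x

/-- The squared length `|∇w|²` of the gradient. -/
def gradSq (w : Euc d → ℝ) (x : Euc d) : ℝ := ∑ i, pd w i x ^ 2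

/-- The Laplacian, in terms of the second partial derivatives `pd2`. -/
def lap (w : Euc d → ℝ) (x : Euc d) : ℝ := ∑ i, pd2 w i i x

/-- The divergence of a vector field given by its coordinate functions. -/
def divergence (X : Fin d → Euc d → ℝ) (x : Euc d) : ℝ := ∑ i, pd (X i) i x

/-- The scalar product `⟨x, X(x)⟩` of a vector field with the position vector. It is not divided
by `‖x‖`, so that it stays polynomial in `x`. -/
def radialPart (X : Fin d → Euc d → ℝ) (x : Euc d) : ℝ := ∑ i, x i * X i x

lemma gradSq_nonneg (w : Euc d → ℝ) (x : Euc d) : 0 ≤ gradSq w x :=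
  Finset.sum_nonneg fun _ _ => sq_nonneg _

lemma sum_coord_sq (x : Euc d) : ∑ i, x i ^ 2 = ‖x‖ ^ 2 := by
  simp [EuclideanSpace.norm_sq_eq]

lemma sq_sum_mul_pd_le (b : Euc d) (w : Euc d → ℝ) (x : Euc d) :
    (∑ i, b i * pd w i x) ^ 2 ≤ ‖b‖ ^ 2 * gradSq w x := by
  rw [← sum_coord_sq]
  exact Finset.sum_mul_sq_le_sq_mul_sq Finset.univ (fun i => b i) (fun i => pd w i x)

lemma euler_sq_le (w : Euc d → ℝ) (x : Euc d) : euler w x ^ 2 ≤ ‖x‖ ^ 2 * gradSq w x :=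
  sq_sum_mul_pd_le x w x

lemma differentiableAt_euler {w : Euc d → ℝ} {x : Euc d} (hw : ContDiffAt ℝ 2 w x) :
    DifferentiableAt ℝ (euler w) x :=
  DifferentiableAt.fun_sum fun j _ =>
    (differentiableAt_coord j x).fun_mul (differentiableAt_pd hw j)

lemma differentiableAt_gradSq {w : Euc d → ℝ} {x : Euc d} (hw : ContDiffAt ℝ 2 w x) :
    DifferentiableAt ℝ (gradSq w) x :=
  DifferentiableAt.fun_sum fun j _ => (differentiableAt_pd hw j).fun_pow 2

lemma pd_euler {w : Euc d → ℝ} {x : Euc d} (hw : ContDiffAt ℝ 2 w x) (i : Fin d) :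
    pd (euler w) i x = pd w i x + ∑ j, x j * pd2 w i j x := by
  have hterm : ∀ j, pd (fun y => y j * pd w j y) i x =
      x j * pd2 w i j x + pd w j x * (if i = j then 1 else 0) := fun j => by
    rw [pd_mul (differentiableAt_coord j x) (differentiableAt_pd hw j), pd_coord]; rfl
  unfold euler
  rw [pd_sum (f := fun j y => y j * pd w j y)
    fun j _ => (differentiableAt_coord j x).fun_mul (differentiableAt_pd hw j)]
  simp [hterm, Finset.sum_add_distrib, add_comm]

lemma pd_gradSq {w : Euc d → ℝ} {x : Euc d} (hw : ContDiffAt ℝ 2 w x) (i : Fin d) :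
    pd (gradSq w) i x = 2 * ∑ j, pd w j x * pd2 w i j x := by
  unfold gradSq
  rw [pd_sum (f := fun j y => pd w j y ^ 2) fun j _ => (differentiableAt_pd hw j).fun_pow 2,
    Finset.mul_sum]
  refine Finset.sum_congr rfl fun j _ => ?_
  rw [pd_sq (differentiableAt_pd hw j), mul_assoc]; rfl

/- This is the cancellation behind the Rellich identity: both sides contain the Hessian form
`D²w(x, ∇w)`. -/
lemma sum_pd_euler_mul_pd {w : Euc d → ℝ} {x : Euc d} (hw : ContDiffAt ℝ 2 w x) :
    ∑ i, pd (euler w) i x * pd w i x = gradSq w x + euler (gradSq w) x / 2 := by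
  have hswap : ∑ i, (∑ j, x j * pd2 w i j x) * pd w i x
      = ∑ i, x i * ∑ j, pd w j x * pd2 w i j x := by
    simp only [Finset.mul_sum, Finset.sum_mul]
    rw [Finset.sum_comm]
    refine Finset.sum_congr rfl fun i _ => Finset.sum_congr rfl fun j _ => ?_
    rw [pd2_comm hw j i]; ring
  have hhess : euler (gradSq w) x = 2 * ∑ i, x i * ∑ j, pd w j x * pd2 w i j x := by
    rw [euler, Finset.mul_sum]
    exact Finset.sum_congr rfl fun i _ => by rw [pd_gradSq hw]; ring
  simp only [pd_euler hw, add_mul, Finset.sum_add_distrib, hswap, hhess, gradSq, sq]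
  ring

lemma divergence_add {X Y : Fin d → Euc d → ℝ} {x : Euc d}
    (hX : ∀ i, DifferentiableAt ℝ (X i) x) (hY : ∀ i, DifferentiableAt ℝ (Y i) x) :
    divergence (fun i y => X i y + Y i y) x = divergence X x + divergence Y x := by
  simp only [divergence, pd_add (hX _) (hY _), Finset.sum_add_distrib]

lemma divergence_mul {f : Euc d → ℝ} {X : Fin d → Euc d → ℝ} {x : Euc d}
    (hf : DifferentiableAt ℝ f x) (hX : ∀ i, DifferentiableAt ℝ (X i) x) :
    divergence (fun i y => f y * X i y) x = f x * divergence X x + ∑ i, pd f i x * X i x := by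
  simp only [divergence, pd_mul hf (hX _), Finset.sum_add_distrib, Finset.mul_sum, mul_comm]

lemma divergence_mul_pd {f w : Euc d → ℝ} {x : Euc d} (hf : DifferentiableAt ℝ f x)
    (hw : ContDiffAt ℝ 2 w x) :
    divergence (fun i y => f y * pd w i y) x = f x * lap w x + ∑ i, pd f i x * pd w i x :=
  divergence_mul hf (differentiableAt_pd hw)

lemma divergence_mul_coord {f : Euc d → ℝ} {x : Euc d} (hf : DifferentiableAt ℝ f x) :
    divergence (fun i y => f y * y i) x = d * f x + euler f x := by
  rw [divergence_mul (X := fun i y => y i) hf fun i => differentiableAt_coord i x]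
  simp [divergence, pd_coord, euler, mul_comm]

lemma divergence_radial_mul {φ : ℝ → ℝ} {X : Fin d → Euc d → ℝ} {x : Euc d}
    (hφ : DifferentiableAt ℝ φ ‖x‖) (hx : x ≠ 0) (hX : ∀ i, DifferentiableAt ℝ (X i) x) :
    divergence (fun i y => φ ‖y‖ * X i y) x =
      φ ‖x‖ * divergence X x + deriv φ ‖x‖ / ‖x‖ * radialPart X x := by
  rw [divergence_mul (differentiableAt_radial hφ hx) hX]
  simp only [pd_radial hφ hx, radialPart, Finset.mul_sum, mul_assoc]

lemma radialPart_radial_mul (φ : ℝ → ℝ) (X : Fin d → Euc d → ℝ) (x : Euc d) :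
    radialPart (fun i y => φ ‖y‖ * X i y) x = φ ‖x‖ * radialPart X x := by
  simp only [radialPart, Finset.mul_sum, mul_left_comm]

/-! ### Pohozaev fields -/

/-- The Pohozaev-type field `2⟨x,∇w⟩∇w - |∇w|² x + q(r) w∇w + g(r) w² x`, where `r = ‖x‖`. The
weights `q` and `g` are chosen so that its product with a Carleman weight has nonnegative
divergence. -/
def pohozaevField (q g : ℝ → ℝ) (w : Euc d → ℝ) (i : Fin d) (x : Euc d) : ℝ :=
  (2 * euler w x + q ‖x‖ * w x) * pd w i x + (g ‖x‖ * w x ^ 2 - gradSq w x) * x i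

lemma radialPart_pohozaevField (q g : ℝ → ℝ) (w : Euc d → ℝ) (x : Euc d) :
    radialPart (pohozaevField q g w) x = 2 * euler w x ^ 2 - ‖x‖ ^ 2 * gradSq w x
      + q ‖x‖ * (w x * euler w x) + g ‖x‖ * (‖x‖ ^ 2 * w x ^ 2) := by
  have h : radialPart (pohozaevField q g w) x =
      (2 * euler w x + q ‖x‖ * w x) * ∑ i, x i * pd w i x
        + (g ‖x‖ * w x ^ 2 - gradSq w x) * ∑ i, x i ^ 2 := by
    simp only [radialPart, pohozaevField, Finset.mul_sum, ← Finset.sum_add_distrib]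
    exact Finset.sum_congr rfl fun i _ => by ring
  rw [h, sum_coord_sq, ← euler]
  ring

lemma differentiableAt_pohozaevField {q g : ℝ → ℝ} {w : Euc d → ℝ} {x : Euc d}
    (hw : ContDiffAt ℝ 2 w x) (hx : x ≠ 0) (hq : DifferentiableAt ℝ q ‖x‖)
    (hg : DifferentiableAt ℝ g ‖x‖) (i : Fin d) :
    DifferentiableAt ℝ (pohozaevField q g w i) x := by
  have hw₀ : DifferentiableAt ℝ w x := hw.differentiableAt (by norm_num)
  exact ((((differentiableAt_euler hw).const_mul 2).fun_add
    ((differentiableAt_radial hq hx).fun_mul hw₀)).fun_mul (differentiableAt_pd hw i)).fun_add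
    ((((differentiableAt_radial hg hx).fun_mul (hw₀.fun_pow 2)).fun_sub
    (differentiableAt_gradSq hw)).fun_mul (differentiableAt_coord i x))

lemma divergence_gradientPart_pohozaevField {q : ℝ → ℝ} {w : Euc d → ℝ} {x : Euc d}
    (hw : ContDiffAt ℝ 2 w x) (hx : x ≠ 0) (hq : DifferentiableAt ℝ q ‖x‖) :
    divergence (fun i y => (2 * euler w y + q ‖y‖ * w y) * pd w i y) x =
      (2 * euler w x + q ‖x‖ * w x) * lap w x + 2 * gradSq w x + euler (gradSq w) x
        + q ‖x‖ * gradSq w x + deriv q ‖x‖ / ‖x‖ * w x * euler w x := by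
  have hw₀ : DifferentiableAt ℝ w x := hw.differentiableAt (by norm_num)
  have h2E := (differentiableAt_euler hw).const_mul 2
  have hqw := (differentiableAt_radial hq hx).fun_mul hw₀
  have hpd : ∀ i, pd (fun y => 2 * euler w y + q ‖y‖ * w y) i x =
      2 * pd (euler w) i x + (q ‖x‖ * pd w i x + w x * (deriv q ‖x‖ / ‖x‖ * x i)) := fun i => by
    rw [pd_add h2E hqw, pd_const_mul (differentiableAt_euler hw),
      pd_mul (differentiableAt_radial hq hx) hw₀, pd_radial hq hx]
  have hsum : ∑ i, pd (fun y => 2 * euler w y + q ‖y‖ * w y) i x * pd w i x =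
      2 * (∑ i, pd (euler w) i x * pd w i x) + q ‖x‖ * gradSq w x
        + deriv q ‖x‖ / ‖x‖ * w x * euler w x := by
    unfold gradSq
    conv_rhs => rw [euler]
    simp only [hpd, Finset.mul_sum, ← Finset.sum_add_distrib]
    exact Finset.sum_congr rfl fun i _ => by ring
  rw [divergence_mul_pd (h2E.fun_add hqw) hw, hsum, sum_pd_euler_mul_pd hw]
  ring

lemma divergence_positionPart_pohozaevField {g : ℝ → ℝ} {w : Euc d → ℝ} {x : Euc d}
    (hw : ContDiffAt ℝ 2 w x) (hx : x ≠ 0) (hg : DifferentiableAt ℝ g ‖x‖) :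
    divergence (fun i y => (g ‖y‖ * w y ^ 2 - gradSq w y) * y i) x =
      d * (g ‖x‖ * w x ^ 2 - gradSq w x) + 2 * g ‖x‖ * w x * euler w x
        + deriv g ‖x‖ * ‖x‖ * w x ^ 2 - euler (gradSq w) x := by
  have hw₀ : DifferentiableAt ℝ w x := hw.differentiableAt (by norm_num)
  have hG := differentiableAt_gradSq hw
  have hgw := (differentiableAt_radial hg hx).fun_mul (hw₀.fun_pow 2)
  have hpd : ∀ i, pd (fun y => g ‖y‖ * w y ^ 2 - gradSq w y) i x =
      g ‖x‖ * (2 * w x * pd w i x) + w x ^ 2 * (deriv g ‖x‖ / ‖x‖ * x i)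
        - pd (gradSq w) i x := fun i => by
    rw [pd_sub hgw hG, pd_mul (differentiableAt_radial hg hx) (hw₀.fun_pow 2), pd_sq hw₀,
      pd_radial hg hx]
  have heuler : euler (fun y => g ‖y‖ * w y ^ 2 - gradSq w y) x =
      2 * g ‖x‖ * w x * euler w x + deriv g ‖x‖ / ‖x‖ * w x ^ 2 * (∑ i, x i ^ 2)
        - euler (gradSq w) x := by
    simp only [euler, hpd, Finset.mul_sum, ← Finset.sum_add_distrib, ← Finset.sum_sub_distrib]
    exact Finset.sum_congr rfl fun i _ => by ring
  rw [divergence_mul_coord (hgw.fun_sub hG), heuler, sum_coord_sq]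
  field_simp [norm_ne_zero_iff.2 hx]
  ring

lemma divergence_pohozaevField {q g : ℝ → ℝ} {w : Euc d → ℝ} {x : Euc d}
    (hw : ContDiffAt ℝ 2 w x) (hx : x ≠ 0) (hq : DifferentiableAt ℝ q ‖x‖)
    (hg : DifferentiableAt ℝ g ‖x‖) :
    divergence (pohozaevField q g w) x =
      2 * euler w x * lap w x + (2 - d) * gradSq w x + q ‖x‖ * (gradSq w x + w x * lap w x)
        + deriv q ‖x‖ / ‖x‖ * (w x * euler w x)
        + g ‖x‖ * (d * w x ^ 2 + 2 * w x * euler w x) + deriv g ‖x‖ * ‖x‖ * w x ^ 2 := by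
  have hw₀ : DifferentiableAt ℝ w x := hw.differentiableAt (by norm_num)
  have hf := ((differentiableAt_euler hw).const_mul 2).fun_add
    ((differentiableAt_radial hq hx).fun_mul hw₀)
  have hh := ((differentiableAt_radial hg hx).fun_mul (hw₀.fun_pow 2)).fun_sub
    (differentiableAt_gradSq hw)
  unfold pohozaevField
  rw [divergence_add (fun i => hf.fun_mul (differentiableAt_pd hw i))
    (fun i => hh.fun_mul (differentiableAt_coord i x)),
    divergence_gradientPart_pohozaevField hw hx hq, divergence_positionPart_pohozaevField hw hx hg]
  ring

/-! ### The divergence theorem outside a ball -/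

/-- The open exterior `{ρ < ‖x‖}` of a closed ball. -/
abbrev exterior (d : ℕ) (ρ : ℝ) : Set (Euc d) := {x | ρ < ‖x‖}

lemma isOpen_exterior (ρ : ℝ) : IsOpen (exterior d ρ) := isOpen_lt continuous_const continuous_norm

lemma ne_zero_of_mem_exterior {ρ : ℝ} (hρ : 0 ≤ ρ) {x : Euc d} (hx : x ∈ exterior d ρ) : x ≠ 0 :=
  norm_pos_iff.1 (hρ.trans_lt hx)

lemma contDiffAt_of_mem_exterior {f : Euc d → ℝ} {n : WithTop ℕ∞} {ρ : ℝ}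
    (hf : ContDiffOn ℝ n f (exterior d ρ)) {x : Euc d} (hx : x ∈ exterior d ρ) :
    ContDiffAt ℝ n f x :=
  hf.contDiffAt ((isOpen_exterior ρ).mem_nhds hx)

lemma contDiffOn_pd {w : Euc d → ℝ} {ρ : ℝ} (hw : ContDiffOn ℝ 2 w (exterior d ρ)) (i : Fin d) :
    ContDiffOn ℝ 1 (pd w i) (exterior d ρ) :=
  (hw.fderiv_of_isOpen (isOpen_exterior ρ) (by norm_num)).clm_apply contDiffOn_const

lemma contDiffOn_coord {n : WithTop ℕ∞} {s : Set (Euc d)} (i : Fin d) :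
    ContDiffOn ℝ n (fun x : Euc d => x i) s :=
  (EuclideanSpace.proj i : Euc d →L[ℝ] ℝ).contDiff.contDiffOn

lemma contDiffOn_euler {w : Euc d → ℝ} {ρ : ℝ} (hw : ContDiffOn ℝ 2 w (exterior d ρ)) :
    ContDiffOn ℝ 1 (euler w) (exterior d ρ) :=
  ContDiffOn.sum fun i _ => (contDiffOn_coord i).mul (contDiffOn_pd hw i)

lemma contDiffOn_gradSq {w : Euc d → ℝ} {ρ : ℝ} (hw : ContDiffOn ℝ 2 w (exterior d ρ)) :
    ContDiffOn ℝ 1 (gradSq w) (exterior d ρ) :=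
  ContDiffOn.sum fun i _ => (contDiffOn_pd hw i).pow 2

lemma contDiffOn_radial {φ : ℝ → ℝ} {n : WithTop ℕ∞} {ρ : ℝ} (hρ : 0 ≤ ρ)
    (hφ : ContDiffOn ℝ n φ (Ioi ρ)) : ContDiffOn ℝ n (fun x : Euc d => φ ‖x‖) (exterior d ρ) :=
  hφ.comp (contDiffOn_id.norm ℝ fun _ hx => ne_zero_of_mem_exterior hρ hx) fun _ hx => hx

lemma contDiffOn_pohozaevField {q g : ℝ → ℝ} {w : Euc d → ℝ} {ρ : ℝ} (hρ : 0 ≤ ρ)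
    (hw : ContDiffOn ℝ 2 w (exterior d ρ)) (hq : ContDiffOn ℝ 1 q (Ioi ρ))
    (hg : ContDiffOn ℝ 1 g (Ioi ρ)) (i : Fin d) :
    ContDiffOn ℝ 1 (pohozaevField q g w i) (exterior d ρ) := by
  have hw₁ : ContDiffOn ℝ 1 w (exterior d ρ) := hw.of_le (by norm_num)
  exact (((contDiffOn_const.mul (contDiffOn_euler hw)).add ((contDiffOn_radial hρ hq).mul hw₁)).mul
    (contDiffOn_pd hw i)).add ((((contDiffOn_radial hρ hg).mul (hw₁.pow 2)).sub
    (contDiffOn_gradSq hw)).mul (contDiffOn_coord i))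

lemma continuousOn_divergence {X : Fin d → Euc d → ℝ} {ρ : ℝ}
    (hX : ∀ i, ContDiffOn ℝ 1 (X i) (exterior d ρ)) :
    ContinuousOn (divergence X) (exterior d ρ) :=
  continuousOn_finsetSum _ fun i _ =>
    ((hX i).continuousOn_fderiv_of_isOpen (isOpen_exterior ρ) le_rfl).clm_apply continuousOn_const

lemma continuousOn_radialPart {X : Fin d → Euc d → ℝ} {ρ : ℝ}
    (hX : ∀ i, ContDiffOn ℝ 1 (X i) (exterior d ρ)) :
    ContinuousOn (radialPart X) (exterior d ρ) :=
  continuousOn_finsetSum _ fun i _ => (contDiffOn_coord i (n := 1)).continuousOn.mul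
    (hX i).continuousOn

lemma contDiff_radial_mul {ψ : ℝ → ℝ} {f : Euc d → ℝ} {n : WithTop ℕ∞} {ρ r₁ : ℝ} (hρ : 0 ≤ ρ)
    (hr₁ : ρ < r₁) (hψ : ContDiffOn ℝ n ψ (Ioi ρ)) (hψ₁ : ∀ t ≤ r₁, ψ t = 0)
    (hf : ContDiffOn ℝ n f (exterior d ρ)) : ContDiff ℝ n fun x => ψ ‖x‖ * f x := by
  refine contDiff_iff_contDiffAt.2 fun x => ?_
  rcases lt_or_ge ρ ‖x‖ with hx | hx
  · exact contDiffAt_of_mem_exterior ((contDiffOn_radial hρ hψ).mul hf) hx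
  · have hev : (fun y : Euc d => ψ ‖y‖ * f y) =ᶠ[nhds x] fun _ => 0 := by
      filter_upwards [(isOpen_lt continuous_norm continuous_const).mem_nhds (hx.trans_lt hr₁)]
        with y (hy : ‖y‖ < r₁)
      rw [hψ₁ _ hy.le, zero_mul]
    exact contDiffAt_const.congr_of_eventuallyEq hev

lemma continuous_radial_mul {ψ : ℝ → ℝ} {f : Euc d → ℝ} {ρ r₁ : ℝ} (hρ : 0 ≤ ρ)
    (hr₁ : ρ < r₁) (hψ : ContinuousOn ψ (Ioi ρ)) (hψ₁ : ∀ t ≤ r₁, ψ t = 0)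
    (hf : ContinuousOn f (exterior d ρ)) : Continuous fun x => ψ ‖x‖ * f x :=
  contDiff_zero.1 <| contDiff_radial_mul (n := 0) hρ hr₁ (contDiffOn_zero.2 hψ) hψ₁
    (contDiffOn_zero.2 hf)

lemma hasCompactSupport_radial_mul {ψ : ℝ → ℝ} {r₂ : ℝ} (hψ₂ : ∀ t, r₂ ≤ t → ψ t = 0)
    (f : Euc d → ℝ) : HasCompactSupport fun x => ψ ‖x‖ * f x :=
  HasCompactSupport.intro (isCompact_closedBall 0 r₂) fun x hx => by
    rw [mem_closedBall_zero_iff, not_le] at hx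
    simp [hψ₂ _ hx.le]

lemma integrable_radial_mul {ψ : ℝ → ℝ} {f : Euc d → ℝ} {ρ r₁ r₂ : ℝ} (hρ : 0 ≤ ρ)
    (hr₁ : ρ < r₁) (hψ : ContinuousOn ψ (Ioi ρ)) (hψ₁ : ∀ t ≤ r₁, ψ t = 0)
    (hψ₂ : ∀ t, r₂ ≤ t → ψ t = 0) (hf : ContinuousOn f (exterior d ρ)) :
    Integrable fun x => ψ ‖x‖ * f x :=
  (continuous_radial_mul hρ hr₁ hψ hψ₁ hf).integrable_of_hasCompactSupport
    (hasCompactSupport_radial_mul hψ₂ f)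

lemma integrable_pd {f : Euc d → ℝ} (hf : ContDiff ℝ 1 f) (hs : HasCompactSupport f) (i : Fin d) :
    Integrable (pd f i) :=
  ((hf.continuous_fderiv one_ne_zero).clm_apply continuous_const).integrable_of_hasCompactSupport
    (hs.fderiv_apply ℝ _)

lemma integral_pd_eq_zero {f : Euc d → ℝ} (hf : ContDiff ℝ 1 f) (hs : HasCompactSupport f)
    (i : Fin d) : ∫ x, pd f i x = 0 := by
  simpa [pd] using integral_mul_fderiv_eq_neg_fderiv_mul_of_integrable
    (μ := (volume : Measure (Euc d))) (f := fun _ => (1 : ℝ)) (g := f)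
    (v := EuclideanSpace.single i 1) (by simp)
    (by simp only [one_mul]; exact integrable_pd hf hs i)
    (by simpa using hf.continuous.integrable_of_hasCompactSupport hs)
    (fun x _ => by fun_prop) (fun x _ => hf.differentiable one_ne_zero x)

lemma integrable_divergence {X : Fin d → Euc d → ℝ} (hX : ∀ i, ContDiff ℝ 1 (X i))
    (hs : ∀ i, HasCompactSupport (X i)) : Integrable (divergence X) :=
  integrable_finsetSum _ fun i _ => integrable_pd (hX i) (hs i) i

lemma integral_divergence_eq_zero {X : Fin d → Euc d → ℝ} (hX : ∀ i, ContDiff ℝ 1 (X i))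
    (hs : ∀ i, HasCompactSupport (X i)) : ∫ x, divergence X x = 0 := by
  simp only [divergence, integral_finsetSum _ fun i _ => integrable_pd (hX i) (hs i) i,
    integral_pd_eq_zero (hX _) (hs _), Finset.sum_const_zero]

lemma divergence_cutoff_mul {ψ : ℝ → ℝ} {X : Fin d → Euc d → ℝ} {ρ r₁ : ℝ} (hρ : 0 ≤ ρ)
    (hr₁ : ρ < r₁) (hψ : ContDiffOn ℝ 1 ψ (Ioi ρ)) (hψ₁ : ∀ t ≤ r₁, ψ t = 0)
    (hX : ∀ i, ContDiffOn ℝ 1 (X i) (exterior d ρ)) :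
    divergence (fun i y => ψ ‖y‖ * X i y) =
      fun x => ψ ‖x‖ * divergence X x + deriv ψ ‖x‖ / ‖x‖ * radialPart X x := by
  funext x
  rcases lt_or_ge ρ ‖x‖ with hx | hx
  · exact divergence_radial_mul ((hψ.contDiffAt (Ioi_mem_nhds hx)).differentiableAt one_ne_zero)
      (ne_zero_of_mem_exterior hρ hx) fun i =>
        (contDiffAt_of_mem_exterior (hX i) hx).differentiableAt one_ne_zero
  · have hψx : ψ =ᶠ[nhds ‖x‖] fun _ => 0 := by
      filter_upwards [Iio_mem_nhds (hx.trans_lt hr₁)] with t ht using hψ₁ t (le_of_lt ht)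
    have hpd : ∀ i, pd (fun y => ψ ‖y‖ * X i y) i x = 0 := fun i =>
      pd_eq_zero_of_eventuallyEq (by
        filter_upwards [continuous_norm.continuousAt.eventually hψx] with y hy
        rw [hy, zero_mul]) i
    simp [divergence, hpd, hψx.eq_of_nhds, hψx.deriv_eq]

lemma integrable_cutoff_mul_divergence {ψ : ℝ → ℝ} {X : Fin d → Euc d → ℝ} {ρ r₁ r₂ : ℝ}
    (hρ : 0 ≤ ρ) (hr₁ : ρ < r₁) (hψ : ContDiffOn ℝ 1 ψ (Ioi ρ)) (hψ₁ : ∀ t ≤ r₁, ψ t = 0)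
    (hψ₂ : ∀ t, r₂ ≤ t → ψ t = 0) (hX : ∀ i, ContDiffOn ℝ 1 (X i) (exterior d ρ)) :
    Integrable fun x => ψ ‖x‖ * divergence X x + deriv ψ ‖x‖ / ‖x‖ * radialPart X x := by
  rw [← divergence_cutoff_mul hρ hr₁ hψ hψ₁ hX]
  exact integrable_divergence (fun i => contDiff_radial_mul hρ hr₁ hψ hψ₁ (hX i))
    fun i => hasCompactSupport_radial_mul hψ₂ (X i)

lemma integral_cutoff_mul_divergence {ψ : ℝ → ℝ} {X : Fin d → Euc d → ℝ} {ρ r₁ r₂ : ℝ}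
    (hρ : 0 ≤ ρ) (hr₁ : ρ < r₁) (hψ : ContDiffOn ℝ 1 ψ (Ioi ρ)) (hψ₁ : ∀ t ≤ r₁, ψ t = 0)
    (hψ₂ : ∀ t, r₂ ≤ t → ψ t = 0) (hX : ∀ i, ContDiffOn ℝ 1 (X i) (exterior d ρ)) :
    ∫ x, (ψ ‖x‖ * divergence X x + deriv ψ ‖x‖ / ‖x‖ * radialPart X x) = 0 := by
  rw [← divergence_cutoff_mul hρ hr₁ hψ hψ₁ hX]
  exact integral_divergence_eq_zero (fun i => contDiff_radial_mul hρ hr₁ hψ hψ₁ (hX i))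
    fun i => hasCompactSupport_radial_mul hψ₂ (X i)

lemma continuous_deriv_smoothTransition : Continuous (deriv Real.smoothTransition) :=
  (Real.smoothTransition.contDiff (n := 1)).continuous_deriv le_rfl

lemma deriv_eq_zero_of_const_left {η : ℝ → ℝ} {r m t : ℝ} (h : ∀ s ≤ r, η s = m) (ht : t < r) :
    deriv η t = 0 := by
  have hev : η =ᶠ[nhds t] fun _ => m := by
    filter_upwards [Iio_mem_nhds ht] with s hs using h s (le_of_lt hs)
  rw [hev.deriv_eq, deriv_const]

lemma deriv_eq_zero_of_const_right {η : ℝ → ℝ} {r m t : ℝ} (h : ∀ s, r ≤ s → η s = m)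
    (ht : r < t) : deriv η t = 0 := by
  have hev : η =ᶠ[nhds t] fun _ => m := by
    filter_upwards [Ioi_mem_nhds ht] with s hs using h s (le_of_lt hs)
  rw [hev.deriv_eq, deriv_const]

lemma deriv_smoothTransition_of_neg {t : ℝ} (ht : t < 0) : deriv Real.smoothTransition t = 0 :=
  deriv_eq_zero_of_const_left (fun _ => Real.smoothTransition.zero_of_nonpos) ht

lemma deriv_smoothTransition_of_one_lt {t : ℝ} (ht : 1 < t) :
    deriv Real.smoothTransition t = 0 :=
  deriv_eq_zero_of_const_right (fun _ => Real.smoothTransition.one_of_one_le) ht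

lemma intervalIntegral_eq_of_le {f : ℝ → ℝ} (hf : Continuous f) {r₂ : ℝ}
    (hf₂ : ∀ t, r₂ ≤ t → f t = 0) (r₁ : ℝ) {t : ℝ} (ht : r₂ ≤ t) :
    ∫ s in r₁..t, f s = ∫ s in r₁..r₂, f s := by
  rw [← intervalIntegral.integral_add_adjacent_intervals (hf.intervalIntegrable r₁ r₂)
    (hf.intervalIntegrable r₂ t), add_eq_left]
  refine intervalIntegral.integral_zero_ae (ae_of_all _ fun s hs => hf₂ s ?_)
  rw [uIoc_of_le ht] at hs
  exact hs.1.le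

lemma intervalIntegral_eq_zero_of_le {f : ℝ → ℝ} {r₁ t : ℝ} (hf₁ : ∀ t ≤ r₁, f t = 0)
    (ht : t ≤ r₁) : ∫ s in r₁..t, f s = 0 := by
  refine intervalIntegral.integral_zero_ae (ae_of_all _ fun s hs => hf₁ s ?_)
  rw [uIoc_of_ge ht] at hs
  exact hs.2

/-! ### Fields pointing inwards -/

/-- The flux of `X` through large spheres, averaged over the radii in `[T - 1, T]` with the weight
`deriv Real.smoothTransition`; `radialPart X x / ‖x‖` is the component of `X` along the outer unit
normal. -/
def shellFlux (X : Fin d → Euc d → ℝ) (T : ℝ) : ℝ :=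
  ∫ x, deriv Real.smoothTransition (T - ‖x‖) * (radialPart X x / ‖x‖)

/-- The test weight that compares the `f`-average of the flux of a vector field with its
`shellFlux`: the primitive of `f` from `r₁` on, cut off between the radii `T - 1` and `T`. -/
def fluxCutoff (f : ℝ → ℝ) (r₁ T t : ℝ) : ℝ := (∫ s in r₁..t, f s) * Real.smoothTransition (T - t)

lemma fluxCutoff_of_le_left {f : ℝ → ℝ} {r₁ t : ℝ} (hf₁ : ∀ t ≤ r₁, f t = 0) (T : ℝ)
    (ht : t ≤ r₁) : fluxCutoff f r₁ T t = 0 := by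
  rw [fluxCutoff, intervalIntegral_eq_zero_of_le hf₁ ht, zero_mul]

lemma fluxCutoff_of_right_le (f : ℝ → ℝ) (r₁ : ℝ) {T t : ℝ} (ht : T ≤ t) :
    fluxCutoff f r₁ T t = 0 := by
  rw [fluxCutoff, Real.smoothTransition.zero_of_nonpos (by linarith), mul_zero]

lemma fluxCutoff_nonneg {f : ℝ → ℝ} {r₁ : ℝ} (hf₀ : ∀ t, 0 ≤ f t) (hf₁ : ∀ t ≤ r₁, f t = 0)
    (T t : ℝ) : 0 ≤ fluxCutoff f r₁ T t := by
  rcases le_total t r₁ with ht | ht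
  · exact (fluxCutoff_of_le_left hf₁ T ht).ge
  · exact mul_nonneg (intervalIntegral.integral_nonneg ht fun s _ => hf₀ s)
      (Real.smoothTransition.nonneg _)

lemma hasDerivAt_fluxCutoff {f : ℝ → ℝ} (hf : Continuous f) (r₁ : ℝ) {r₂ T : ℝ}
    (hf₂ : ∀ t, r₂ ≤ t → f t = 0) (hT : r₂ + 1 < T) (t : ℝ) :
    HasDerivAt (fluxCutoff f r₁ T)
      (f t - (∫ s in r₁..r₂, f s) * deriv Real.smoothTransition (T - t)) t := by
  have hS : HasDerivAt (fun t => Real.smoothTransition (T - t))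
      (-deriv Real.smoothTransition (T - t)) t := by
    have hS₀ := (Real.smoothTransition.contDiff (n := 1)).differentiable one_ne_zero (T - t)
    simpa [Function.comp_def] using hS₀.hasDerivAt.comp t ((hasDerivAt_id t).const_sub T)
  refine ((hf.integral_hasStrictDerivAt r₁ t).hasDerivAt.mul hS).congr_deriv ?_
  rcases le_total t r₂ with ht | ht
  · rw [Real.smoothTransition.one_of_one_le (by linarith),
      deriv_smoothTransition_of_one_lt (by linarith)]
    ring
  · rw [intervalIntegral_eq_of_le hf hf₂ r₁ ht, hf₂ t ht]
    ring

lemma contDiff_fluxCutoff {f : ℝ → ℝ} (hf : Continuous f) (r₁ T : ℝ) :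
    ContDiff ℝ 1 (fluxCutoff f r₁ T) := by
  have hint : ContDiff ℝ 1 fun t => ∫ s in r₁..t, f s := by
    have hd := fun t => (hf.integral_hasStrictDerivAt r₁ t).hasDerivAt
    refine contDiff_one_iff_deriv.2 ⟨fun t => (hd t).differentiableAt, ?_⟩
    rwa [show deriv (fun t => ∫ s in r₁..t, f s) = f from funext fun t => (hd t).deriv]
  exact hint.mul (Real.smoothTransition.contDiff.comp (contDiff_const.sub contDiff_id))

lemma continuousOn_radialPart_div_norm {X : Fin d → Euc d → ℝ} {ρ : ℝ} (hρ : 0 ≤ ρ)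
    (hX : ∀ i, ContDiffOn ℝ 1 (X i) (exterior d ρ)) :
    ContinuousOn (fun x => radialPart X x / ‖x‖) (exterior d ρ) :=
  (continuousOn_radialPart hX).div continuous_norm.continuousOn
    fun _ hx => norm_ne_zero_iff.2 (ne_zero_of_mem_exterior hρ hx)

lemma integral_fluxCutoff_mul_divergence {X : Fin d → Euc d → ℝ} {f : ℝ → ℝ} {ρ r₁ r₂ T : ℝ}
    (hρ : 0 ≤ ρ) (hr₁ : ρ < r₁) (hT₁ : r₁ + 1 < T) (hT₂ : r₂ + 1 < T)
    (hX : ∀ i, ContDiffOn ℝ 1 (X i) (exterior d ρ)) (hf : Continuous f)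
    (hf₁ : ∀ t ≤ r₁, f t = 0) (hf₂ : ∀ t, r₂ ≤ t → f t = 0) :
    ∫ x, fluxCutoff f r₁ T ‖x‖ * divergence X x =
      (∫ t in r₁..r₂, f t) * shellFlux X T - ∫ x, f ‖x‖ * (radialPart X x / ‖x‖) := by
  have hψc := contDiff_fluxCutoff hf r₁ T
  have hψ₁ := fun t => fluxCutoff_of_le_left hf₁ T (t := t)
  have hψ₂ := fun t => fluxCutoff_of_right_le f r₁ (T := T) (t := t)
  have hflux := continuousOn_radialPart_div_norm hρ hX
  have hi₁ := integrable_radial_mul hρ hr₁ hψc.continuous.continuousOn hψ₁ hψ₂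
    (continuousOn_divergence hX)
  have hi₂ := integrable_radial_mul hρ hr₁ hf.continuousOn hf₁ hf₂ hflux
  have hi₃ : Integrable fun x => deriv Real.smoothTransition (T - ‖x‖) * (radialPart X x / ‖x‖) :=
    integrable_radial_mul (ψ := fun t => deriv Real.smoothTransition (T - t)) (r₂ := T + 1) hρ hr₁
      (continuous_deriv_smoothTransition.comp (by fun_prop)).continuousOn
      (fun t ht => deriv_smoothTransition_of_one_lt (by linarith))
      (fun t ht => deriv_smoothTransition_of_neg (by linarith)) hflux
  have hgreen := integral_cutoff_mul_divergence hρ hr₁ hψc.contDiffOn hψ₁ hψ₂ hX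
  have hint : ∫ x, (fluxCutoff f r₁ T ‖x‖ * divergence X x + (f ‖x‖ * (radialPart X x / ‖x‖)
      - (∫ t in r₁..r₂, f t) * (deriv Real.smoothTransition (T - ‖x‖) *
        (radialPart X x / ‖x‖)))) = 0 := by
    rw [← hgreen]
    refine integral_congr_ae (Eventually.of_forall fun x => ?_)
    simp only [(hasDerivAt_fluxCutoff hf r₁ hf₂ hT₂ _).deriv]
    ring
  rw [integral_add hi₁ (hi₂.sub' (hi₃.const_mul _)), integral_sub hi₂ (hi₃.const_mul _),
    integral_const_mul, ← shellFlux] at hint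
  linarith

/-- A `C¹` vector field with nonnegative divergence whose flux through large spheres tends to `0`.
By the divergence theorem its flux through every sphere in the exterior points inwards. -/
structure IsInflow (ρ : ℝ) (X : Fin d → Euc d → ℝ) : Prop where
  contDiffOn : ∀ i, ContDiffOn ℝ 1 (X i) (exterior d ρ)
  divergence_nonneg : ∀ x ∈ exterior d ρ, 0 ≤ divergence X x
  tendsto_shellFlux : Tendsto (shellFlux X) atTop (nhds 0)

lemma IsInflow.integral_flux_nonpos {X : Fin d → Euc d → ℝ} {f : ℝ → ℝ} {ρ r₁ r₂ : ℝ}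
    (hX : IsInflow ρ X) (hρ : 0 ≤ ρ) (hr₁ : ρ < r₁) (hf : Continuous f) (hf₀ : ∀ t, 0 ≤ f t)
    (hf₁ : ∀ t ≤ r₁, f t = 0) (hf₂ : ∀ t, r₂ ≤ t → f t = 0) :
    ∫ x, f ‖x‖ * (radialPart X x / ‖x‖) ≤ 0 := by
  refine ge_of_tendsto
    (by simpa using hX.tendsto_shellFlux.const_mul (∫ t in r₁..r₂, f t)) ?_
  filter_upwards [eventually_gt_atTop (r₁ + 1), eventually_gt_atTop (r₂ + 1)] with T hT₁ hT₂
  rw [← sub_nonneg,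
    ← integral_fluxCutoff_mul_divergence hρ hr₁ hT₁ hT₂ hX.contDiffOn hf hf₁ hf₂]
  refine integral_nonneg fun x => ?_
  rcases lt_or_ge ρ ‖x‖ with hx | hx
  · exact mul_nonneg (fluxCutoff_nonneg hf₀ hf₁ T _) (hX.divergence_nonneg x hx)
  · simp [fluxCutoff_of_le_left hf₁ T (hx.trans hr₁.le)]

/-- A continuous bump, positive exactly on `(r₁, r₂)`. -/
def tentBump (r₁ r₂ t : ℝ) : ℝ := max 0 (min (t - r₁) (r₂ - t))

lemma continuous_tentBump (r₁ r₂ : ℝ) : Continuous (tentBump r₁ r₂) := by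
  unfold tentBump; fun_prop

lemma tentBump_nonneg (r₁ r₂ t : ℝ) : 0 ≤ tentBump r₁ r₂ t := le_max_left _ _

lemma tentBump_of_le_left {r₁ r₂ t : ℝ} (ht : t ≤ r₁) : tentBump r₁ r₂ t = 0 :=
  max_eq_left ((min_le_left _ _).trans (by linarith))

lemma tentBump_of_right_le {r₁ r₂ t : ℝ} (ht : r₂ ≤ t) : tentBump r₁ r₂ t = 0 :=
  max_eq_left ((min_le_right _ _).trans (by linarith))

lemma tentBump_pos {r₁ r₂ t : ℝ} (h₁ : r₁ < t) (h₂ : t < r₂) : 0 < tentBump r₁ r₂ t :=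
  lt_max_of_lt_right (lt_min (by linarith) (by linarith))

lemma eq_zero_of_integral_tentBump_nonpos {f g : Euc d → ℝ} {ρ r₁ r₂ : ℝ} (hρ : 0 ≤ ρ)
    (hr₁ : ρ < r₁) (hf : ContinuousOn f (exterior d ρ)) (hg : ContinuousOn g (exterior d ρ))
    (hf₀ : ∀ x, 0 ≤ f x)
    (h : ∀ A : ℝ, ∃ a ≥ A, ∫ x : Euc d, tentBump r₁ r₂ ‖x‖ * (a * f x - g x) ≤ 0)
    {x : Euc d} (h₁ : r₁ < ‖x‖) (h₂ : ‖x‖ < r₂) : f x = 0 := by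
  have hbump := (continuous_tentBump r₁ r₂).continuousOn (s := Ioi ρ)
  have hfc := continuous_radial_mul hρ hr₁ hbump (fun t => tentBump_of_le_left) hf
  have hfi := integrable_radial_mul hρ hr₁ hbump (fun t => tentBump_of_le_left)
    (fun t => tentBump_of_right_le) hf
  have hgi := integrable_radial_mul hρ hr₁ hbump (fun t => tentBump_of_le_left)
    (fun t => tentBump_of_right_le) hg
  have hnonneg : ∀ y : Euc d, 0 ≤ tentBump r₁ r₂ ‖y‖ * f y := fun y =>
    mul_nonneg (tentBump_nonneg _ _ _) (hf₀ y)
  have hle : ∀ A : ℝ, ∃ a ≥ A,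
      a * ∫ x, tentBump r₁ r₂ ‖x‖ * f x ≤ ∫ x, tentBump r₁ r₂ ‖x‖ * g x := fun A => by
    obtain ⟨a, ha, hint⟩ := h A
    refine ⟨a, ha, ?_⟩
    rw [← sub_nonpos, ← integral_const_mul, ← integral_sub (hfi.const_mul a) hgi]
    refine le_of_eq_of_le (integral_congr_ae (Eventually.of_forall fun y => ?_)) hint
    ring
  have hzero : ∫ x, tentBump r₁ r₂ ‖x‖ * f x = 0 := by
    by_contra hne
    have hpos := lt_of_le_of_ne (integral_nonneg hnonneg) (Ne.symm hne)
    obtain ⟨a, ha, hint⟩ := hle ((∫ x, tentBump r₁ r₂ ‖x‖ * g x) /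
      (∫ x, tentBump r₁ r₂ ‖x‖ * f x) + 1)
    have := (div_lt_iff₀ hpos).1 (lt_of_lt_of_le (lt_add_one _) ha)
    linarith
  have hae := (integral_eq_zero_iff_of_nonneg hnonneg hfi).1 hzero
  have hx := congrFun ((hfc.ae_eq_iff_eq volume continuous_const).1 hae) x
  exact (mul_eq_zero.1 hx).resolve_left (tentBump_pos h₁ h₂).ne'

lemma continuous_of_continuousOn_Ioi {f : ℝ → ℝ} {ρ r₁ : ℝ} (hr₁ : ρ < r₁)
    (hf : ContinuousOn f (Ioi ρ)) (hf₁ : ∀ t ≤ r₁, f t = 0) : Continuous f := by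
  refine continuous_iff_continuousAt.2 fun t => ?_
  rcases lt_or_ge ρ t with ht | ht
  · exact hf.continuousAt (Ioi_mem_nhds ht)
  · exact continuousAt_const.congr (f := fun _ => 0) (by
      filter_upwards [Iio_mem_nhds (ht.trans_lt hr₁)] with s hs using (hf₁ s (le_of_lt hs)).symm)

/- The weight `t · tentBump / α` turns the sign of the flux into a sign of the integral of `F`. -/
lemma IsInflow.integral_tentBump_mul_nonpos {X : Fin d → Euc d → ℝ} {F : Euc d → ℝ} {α : ℝ → ℝ}
    {ρ r₁ : ℝ} (hX : IsInflow ρ X) (hρ : 0 ≤ ρ) (hr₁ : ρ < r₁) (r₂ : ℝ)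
    (hF : ContinuousOn F (exterior d ρ)) (hα : ContinuousOn α (Ioi ρ)) (hα₀ : ∀ t, ρ < t → 0 < α t)
    (hle : ∀ x ∈ exterior d ρ, α ‖x‖ * F x ≤ radialPart X x) :
    ∫ x, tentBump r₁ r₂ ‖x‖ * F x ≤ 0 := by
  set η : ℝ → ℝ := fun t => t * tentBump r₁ r₂ t / α t with hη
  have hη₁ : ∀ t ≤ r₁, η t = 0 := fun t ht => by simp [hη, tentBump_of_le_left ht]
  have hη₂ : ∀ t, r₂ ≤ t → η t = 0 := fun t ht => by simp [hη, tentBump_of_right_le ht]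
  have hηc : Continuous η := continuous_of_continuousOn_Ioi hr₁
    ((continuous_id.mul (continuous_tentBump _ _)).continuousOn.div hα fun t ht =>
      (hα₀ t ht).ne') hη₁
  have hη₀ : ∀ t, 0 ≤ η t := fun t => by
    rcases le_or_gt t r₁ with ht | ht
    · exact (hη₁ t ht).ge
    · exact div_nonneg (mul_nonneg (by linarith) (tentBump_nonneg _ _ _))
        (hα₀ t (hr₁.trans ht)).le
  refine (integral_mono ?_ ?_ fun x => ?_).trans
    (hX.integral_flux_nonpos hρ hr₁ hηc hη₀ hη₁ hη₂)
  · exact integrable_radial_mul hρ hr₁ (continuous_tentBump _ _).continuousOn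
      (fun t => tentBump_of_le_left) (fun t => tentBump_of_right_le) hF
  · exact integrable_radial_mul hρ hr₁ hηc.continuousOn hη₁ hη₂
      (continuousOn_radialPart_div_norm hρ hX.contDiffOn)
  · rcases le_or_gt ‖x‖ r₁ with hx | hx
    · simp [hη₁ _ hx, tentBump_of_le_left hx]
    · have hαx := hα₀ _ (hr₁.trans hx)
      have hx₀ : 0 < ‖x‖ := by linarith
      have hηx : η ‖x‖ * (radialPart X x / ‖x‖) =
          tentBump r₁ r₂ ‖x‖ * (radialPart X x / α ‖x‖) := by
        simp only [hη]; field_simp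
      simp only [hηx]
      refine mul_le_mul_of_nonneg_left ?_ (tentBump_nonneg _ _ _)
      rw [le_div_iff₀ hαx, mul_comm]
      exact hle x (hr₁.trans hx)

lemma eq_zero_of_isInflow {f g : Euc d → ℝ} {ρ : ℝ} (hρ : 0 ≤ ρ)
    (hf : ContinuousOn f (exterior d ρ)) (hg : ContinuousOn g (exterior d ρ)) (hf₀ : ∀ x, 0 ≤ f x)
    (h : ∀ A : ℝ, ∃ a ≥ A, ∃ (α : ℝ → ℝ) (X : Fin d → Euc d → ℝ),
      ContinuousOn α (Ioi ρ) ∧ (∀ t, ρ < t → 0 < α t) ∧ IsInflow ρ X ∧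
      ∀ x ∈ exterior d ρ, α ‖x‖ * (a * f x - g x) ≤ radialPart X x)
    {x : Euc d} (hx : x ∈ exterior d ρ) : f x = 0 := by
  obtain ⟨r₁, hr₁, hx₁⟩ : ∃ r₁, ρ < r₁ ∧ r₁ < ‖x‖ := exists_between hx
  refine eq_zero_of_integral_tentBump_nonpos hρ hr₁ hf hg hf₀ (fun A => ?_) hx₁ (lt_add_one ‖x‖)
  obtain ⟨a, ha, α, X, hα, hα₀, hX, hle⟩ := h A
  exact ⟨a, ha, hX.integral_tentBump_mul_nonpos hρ hr₁ _ ((continuousOn_const.mul hf).sub hg)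
    hα hα₀ hle⟩

/-! ### Unique continuation from infinity -/

/-- The Pohozaev field with the Carleman weight `exp (τ |x|²)`. It proves unique continuation from
a neighbourhood of infinity. -/
def gaussianField (τ : ℝ) (w : Euc d → ℝ) (i : Fin d) (x : Euc d) : ℝ :=
  Real.exp (τ * ‖x‖ ^ 2) * pohozaevField (fun t => 2 * τ * t ^ 2 + (d - 1))
    (fun t => 2 * τ ^ 2 * t ^ 2 - (d + 1) * τ) w i x

lemma divergence_gaussianField (τ : ℝ) {w : Euc d → ℝ} {x : Euc d} (hw : ContDiffAt ℝ 2 w x)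
    (hx : x ≠ 0) :
    divergence (gaussianField τ w) x = Real.exp (τ * ‖x‖ ^ 2) *
      (gradSq w x + 4 * τ * (euler w x + τ * ‖x‖ ^ 2 * w x) ^ 2
        + (2 * τ ^ 2 * ‖x‖ ^ 2 - d * (d + 1) * τ) * w x ^ 2
        + lap w x * (2 * (euler w x + τ * ‖x‖ ^ 2 * w x) + (d - 1) * w x)) := by
  have hα : ∀ t : ℝ, HasDerivAt (fun t => Real.exp (τ * t ^ 2))
      (Real.exp (τ * t ^ 2) * (τ * (2 * t))) t := fun t => by
    simpa using ((hasDerivAt_pow 2 t).const_mul τ).exp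
  have hq : ∀ t : ℝ, HasDerivAt (fun t => 2 * τ * t ^ 2 + ((d : ℝ) - 1))
      (2 * τ * (2 * t)) t := fun t => by
    simpa using ((hasDerivAt_pow 2 t).const_mul (2 * τ)).add_const ((d : ℝ) - 1)
  have hg : ∀ t : ℝ, HasDerivAt (fun t => 2 * τ ^ 2 * t ^ 2 - ((d : ℝ) + 1) * τ)
      (2 * τ ^ 2 * (2 * t)) t := fun t => by
    simpa using ((hasDerivAt_pow 2 t).const_mul (2 * τ ^ 2)).sub_const (((d : ℝ) + 1) * τ)
  have hq' := (hq ‖x‖).differentiableAt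
  have hg' := (hg ‖x‖).differentiableAt
  have hx' := norm_ne_zero_iff.2 hx
  unfold gaussianField
  rw [divergence_radial_mul (φ := fun t => Real.exp (τ * t ^ 2)) (hα _).differentiableAt hx
    (differentiableAt_pohozaevField hw hx hq' hg'), divergence_pohozaevField hw hx hq' hg',
    radialPart_pohozaevField, (hα _).deriv, (hq _).deriv, (hg _).deriv]
  field_simp
  ring

lemma radialPart_gaussianField (τ : ℝ) (w : Euc d → ℝ) (x : Euc d) :
    radialPart (gaussianField τ w) x = Real.exp (τ * ‖x‖ ^ 2) *
      (2 * euler w x ^ 2 - ‖x‖ ^ 2 * gradSq w x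
        + (2 * (τ * ‖x‖ ^ 2) + (d - 1)) * (w x * euler w x)
        + (2 * (τ * ‖x‖ ^ 2) ^ 2 - (d + 1) * (τ * ‖x‖ ^ 2)) * w x ^ 2) := by
  unfold gaussianField
  rw [radialPart_radial_mul fun t => Real.exp (τ * t ^ 2), radialPart_pohozaevField]
  ring

lemma contDiffOn_gaussianField (τ : ℝ) {w : Euc d → ℝ} {ρ : ℝ} (hρ : 0 ≤ ρ)
    (hw : ContDiffOn ℝ 2 w (exterior d ρ)) (i : Fin d) :
    ContDiffOn ℝ 1 (gaussianField τ w i) (exterior d ρ) :=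
  (contDiffOn_radial (φ := fun t => Real.exp (τ * t ^ 2)) hρ (by fun_prop)).mul
    (contDiffOn_pohozaevField hρ hw (by fun_prop) (by fun_prop) i)

lemma divergence_gaussianField_nonneg {w : Euc d → ℝ} {C τ : ℝ} {x : Euc d}
    (hw : ContDiffAt ℝ 2 w x) (hx : x ≠ 0) (hC : 1 ≤ C) (hCτ : C ≤ τ)
    (hτ : (d + 1) ^ 2 + 1 + C * (d - 1) ^ 2 ≤ τ * ‖x‖ ^ 2)
    (hlap : lap w x ^ 2 ≤ C * (gradSq w x + w x ^ 2)) :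
    0 ≤ divergence (gaussianField τ w) x := by
  rw [divergence_gaussianField τ hw hx]
  refine mul_nonneg (Real.exp_pos _).le ?_
  have hG := gradSq_nonneg w x
  generalize gradSq w x = G at *
  generalize lap w x = L at *
  generalize euler w x + τ * ‖x‖ ^ 2 * w x = Z
  generalize w x = v at *
  have hcross : -(1 / 2 * (G + v ^ 2) + C * (4 * Z ^ 2 + (d - 1) ^ 2 * v ^ 2)) ≤
      L * (2 * Z + (d - 1) * v) := by
    have hL : L ^ 2 / C ≤ G + v ^ 2 := (div_le_iff₀' (by linarith)).2 hlap
    have hsq : (L + C * (2 * Z + (d - 1) * v)) ^ 2 / C =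
        L ^ 2 / C + 2 * (L * (2 * Z + (d - 1) * v)) + C * (2 * Z + (d - 1) * v) ^ 2 := by
      field_simp; ring
    have hsq₀ : 0 ≤ (L + C * (2 * Z + (d - 1) * v)) ^ 2 / C := by positivity
    have hpar : 0 ≤ C * (2 * Z - (d - 1) * v) ^ 2 := by positivity
    linarith
  have hcoef : 1 + C * (d - 1) ^ 2 ≤ 2 * τ ^ 2 * ‖x‖ ^ 2 - d * (d + 1) * τ := by
    have hgap : 1 + C * (d - 1) ^ 2 ≤ 2 * (τ * ‖x‖ ^ 2) - d * (d + 1) := by nlinarith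
    have hpos : 0 ≤ 1 + C * ((d : ℝ) - 1) ^ 2 := by positivity
    nlinarith
  have hv := mul_le_mul_of_nonneg_right hcoef (sq_nonneg v)
  have hZ := mul_le_mul_of_nonneg_right hCτ (sq_nonneg Z)
  nlinarith [sq_nonneg v]

lemma le_radialPart_gaussianField {w : Euc d → ℝ} {τ : ℝ} {x : Euc d}
    (hτ : (d + 1) ^ 2 + 1 + (d - 1) ^ 2 ≤ τ * ‖x‖ ^ 2) :
    Real.exp (τ * ‖x‖ ^ 2) * (τ * ‖x‖ ^ 2 * w x ^ 2 - ‖x‖ ^ 2 * gradSq w x) ≤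
      radialPart (gaussianField τ w) x := by
  rw [radialPart_gaussianField]
  refine mul_le_mul_of_nonneg_left ?_ (Real.exp_pos _).le
  generalize τ * ‖x‖ ^ 2 = y at *
  have hsq : 0 ≤ 2 * (euler w x + (2 * y + (d - 1)) / 4 * w x) ^ 2 := by positivity
  have hcoef : y ≤ 2 * y ^ 2 - (d + 1) * y - (2 * y + (d - 1)) ^ 2 / 8 := by
    nlinarith [sq_nonneg ((d : ℝ) - 1), sq_nonneg (2 * y - (d - 1))]
  have hv := mul_le_mul_of_nonneg_right hcoef (sq_nonneg (w x))
  linarith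

lemma isInflow_gaussianField {w : Euc d → ℝ} {C τ R ρ : ℝ} (hρ : 0 ≤ ρ)
    (hw : ContDiffOn ℝ 2 w (exterior d ρ)) (hC : 1 ≤ C) (hCτ : C ≤ τ)
    (hτ : (d + 1) ^ 2 + 1 + C * (d - 1) ^ 2 ≤ τ * ρ ^ 2)
    (hlap : ∀ x ∈ exterior d ρ, lap w x ^ 2 ≤ C * (gradSq w x + w x ^ 2))
    (hout : ∀ x, R < ‖x‖ → w x = 0) : IsInflow ρ (gaussianField τ w) where
  contDiffOn := contDiffOn_gaussianField τ hρ hw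
  divergence_nonneg x hx := by
    refine divergence_gaussianField_nonneg (contDiffAt_of_mem_exterior hw hx)
      (ne_zero_of_mem_exterior hρ hx) hC hCτ (hτ.trans ?_) (hlap x hx)
    have hxρ : ρ < ‖x‖ := hx
    have hτ₀ : 0 ≤ τ := by linarith
    gcongr
  tendsto_shellFlux := by
    refine tendsto_const_nhds.congr' ?_
    filter_upwards [eventually_gt_atTop (R + 1)] with T hT
    refine (integral_eq_zero_of_ae (Eventually.of_forall fun x => ?_)).symm
    rcases le_or_gt ‖x‖ R with hx | hx
    · simp [deriv_smoothTransition_of_one_lt (t := T - ‖x‖) (by linarith)]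
    · have hev : w =ᶠ[nhds x] fun _ => 0 := by
        filter_upwards [(isOpen_exterior R).mem_nhds hx] using hout
      simp [radialPart_gaussianField, euler, gradSq, pd_eq_zero_of_eventuallyEq hev, hev.eq_of_nhds]

lemma eq_zero_of_lap_sq_le {w : Euc d → ℝ} {C R ρ : ℝ} (hρ : 0 ≤ ρ)
    (hw : ContDiffOn ℝ 2 w (exterior d ρ))
    (hlap : ∀ x ∈ exterior d ρ, lap w x ^ 2 ≤ C * (gradSq w x + w x ^ 2))
    (hout : ∀ x, R < ‖x‖ → w x = 0) {x : Euc d} (hx : x ∈ exterior d ρ) : w x = 0 := by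
  obtain ⟨ρ₁, hρ₁, hx₁⟩ : ∃ ρ₁, ρ < ρ₁ ∧ ρ₁ < ‖x‖ := exists_between hx
  have hρ₁₀ : 0 < ρ₁ := hρ.trans_lt hρ₁
  have hsub : exterior d ρ₁ ⊆ exterior d ρ := fun y => hρ₁.trans
  set C₁ := max C 1
  have hlap₁ : ∀ y ∈ exterior d ρ₁, lap w y ^ 2 ≤ C₁ * (gradSq w y + w y ^ 2) := fun y hy =>
    (hlap y (hsub hy)).trans (mul_le_mul_of_nonneg_right (le_max_left _ _)
      (add_nonneg (gradSq_nonneg w y) (sq_nonneg _)))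
  have hw₁ := hw.mono hsub
  refine pow_eq_zero_iff two_ne_zero |>.1 (eq_zero_of_isInflow (f := fun y => w y ^ 2)
    (g := fun y => ‖y‖ ^ 2 * gradSq w y) hρ₁₀.le (hw₁.continuousOn.pow 2)
    ((continuous_norm.pow 2).continuousOn.mul (contDiffOn_gradSq hw₁).continuousOn)
    (fun y => sq_nonneg _) (fun A => ?_) hx₁)
  set τ := max C₁ (max A ((d + 1) ^ 2 + 1 + C₁ * (d - 1) ^ 2) / ρ₁ ^ 2)
  have hτρ : max A ((d + 1) ^ 2 + 1 + C₁ * (d - 1) ^ 2) ≤ τ * ρ₁ ^ 2 :=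
    (div_le_iff₀ (by positivity)).1 (le_max_right _ _)
  have hτ₁ := (le_max_right _ _).trans hτρ
  refine ⟨τ * ρ₁ ^ 2, (le_max_left _ _).trans hτρ, fun t => Real.exp (τ * t ^ 2),
    gaussianField τ w, by fun_prop, fun t _ => Real.exp_pos _,
    isInflow_gaussianField hρ₁₀.le hw₁ (le_max_right _ _) (le_max_left _ _) hτ₁ hlap₁ hout,
    fun y hy => le_trans ?_ (le_radialPart_gaussianField ?_)⟩
  · have hyρ : ρ₁ < ‖y‖ := hy
    gcongr
  · have hyρ : ρ₁ < ‖y‖ := hy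
    have hτy : τ * ρ₁ ^ 2 ≤ τ * ‖y‖ ^ 2 := by gcongr
    have hC := mul_le_mul_of_nonneg_right (le_max_right C 1) (sq_nonneg ((d : ℝ) - 1))
    linarith

/-! ### Rapidly decaying solutions of `Δw = kw` -/

/-- The Carleman weight `r ^ (2c) * exp (2κr)`. -/
def expWeight (c : ℕ) (κ t : ℝ) : ℝ := t ^ (2 * c) * Real.exp (2 * κ * t)

/-- The coefficient `q` of `w∇w` in the Pohozaev field that goes with `expWeight c κ`. In terms of
`p = c + κr = r α' / (2α)` it is `2p + d - 2`, which removes `|∇w|²` from the divergence. -/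
def expCrossCoeff (d c : ℕ) (κ t : ℝ) : ℝ := 2 * (c + κ * t) + d - 2

/-- The coefficient of `w²x` in the Pohozaev field that goes with `expWeight c κ` and the equation
`Δw = kw`. It turns the terms of the divergence in `⟨x, ∇w⟩` into a complete square. -/
def expSqCoeff (d c : ℕ) (κ k t : ℝ) : ℝ :=
  ((c + κ * t) * expCrossCoeff d c κ t - κ * t) / t ^ 2 - k

/-- The Pohozaev field with the Carleman weight `expWeight c κ`. It proves the vanishing near
infinity of solutions of `Δw = kw` that decay faster than `exp (-κ|x|)`. -/
def expField (c : ℕ) (κ k : ℝ) (w : Euc d → ℝ) (i : Fin d) (x : Euc d) : ℝ :=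
  expWeight c κ ‖x‖ * pohozaevField (expCrossCoeff d c κ) (expSqCoeff d c κ k) w i x

lemma expWeight_pos (c : ℕ) (κ : ℝ) {t : ℝ} (ht : 0 < t) : 0 < expWeight c κ t :=
  mul_pos (pow_pos ht _) (Real.exp_pos _)

lemma expWeight_mono (c : ℕ) {κ s t : ℝ} (hκ : 0 ≤ κ) (hs : 0 ≤ s) (hst : s ≤ t) :
    expWeight c κ s ≤ expWeight c κ t := by
  have ht : 0 ≤ t := hs.trans hst
  unfold expWeight
  gcongr

lemma contDiff_expWeight (c : ℕ) (κ : ℝ) : ContDiff ℝ 1 (expWeight c κ) := by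
  unfold expWeight; fun_prop

lemma contDiff_expCrossCoeff (d c : ℕ) (κ : ℝ) : ContDiff ℝ 1 (expCrossCoeff d c κ) := by
  unfold expCrossCoeff; fun_prop

lemma contDiffOn_expSqCoeff (d c : ℕ) (κ k : ℝ) {ρ : ℝ} (hρ : 0 ≤ ρ) :
    ContDiffOn ℝ 1 (expSqCoeff d c κ k) (Ioi ρ) := by
  have hq := contDiff_expCrossCoeff d c κ
  refine (ContDiff.contDiffOn (by fun_prop)).div (ContDiff.contDiffOn (by fun_prop))
    (fun t ht => ?_) |>.sub contDiffOn_const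
  exact pow_ne_zero 2 (hρ.trans_lt ht).ne'

lemma hasDerivAt_expWeight {c : ℕ} (κ : ℝ) {t : ℝ} (ht : t ≠ 0) :
    HasDerivAt (expWeight c κ) (2 * (c + κ * t) * expWeight c κ t / t) t := by
  have h := (hasDerivAt_pow (2 * c) t).mul ((hasDerivAt_id t).const_mul (2 * κ)).exp
  refine h.congr_deriv ?_
  rw [expWeight, eq_div_iff ht]
  rcases c with _ | c
  · simp; ring
  · simp [show 2 * (c + 1) = 2 * c + 1 + 1 from rfl]
    ring

lemma hasDerivAt_expCrossCoeff (d c : ℕ) (κ t : ℝ) :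
    HasDerivAt (expCrossCoeff d c κ) (2 * κ) t := by
  unfold expCrossCoeff
  simpa using (((((hasDerivAt_id t).const_mul κ).const_add (c : ℝ)).const_mul 2).add_const
    (d : ℝ)).sub_const 2

lemma hasDerivAt_expSqCoeff (d c : ℕ) (κ k : ℝ) {t : ℝ} (ht : t ≠ 0) :
    HasDerivAt (expSqCoeff d c κ k) ((κ * (expCrossCoeff d c κ t + 2 * (c + κ * t) - 1) * t
      - 2 * ((c + κ * t) * expCrossCoeff d c κ t - κ * t)) / t ^ 3) t := by
  have hp : HasDerivAt (fun t => c + κ * t) κ t := by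
    simpa using ((hasDerivAt_id t).const_mul κ).const_add (c : ℝ)
  have hκ : HasDerivAt (fun t => κ * t) κ t := by simpa using (hasDerivAt_id t).const_mul κ
  have h := (((hp.mul (hasDerivAt_expCrossCoeff d c κ t)).sub hκ).div (hasDerivAt_pow 2 t)
    (pow_ne_zero 2 ht)).sub_const k
  refine h.congr_deriv ?_
  simp only [Pi.sub_apply, Pi.mul_apply]
  field_simp
  ring

lemma divergence_expField {c : ℕ} {κ k : ℝ} {w : Euc d → ℝ} {x : Euc d} (hw : ContDiffAt ℝ 2 w x)
    (hx : x ≠ 0) (hlap : lap w x = k * w x) :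
    divergence (expField c κ k w) x = expWeight c κ ‖x‖ / ‖x‖ ^ 2 *
      (4 * (c + κ * ‖x‖) * (euler w x + expCrossCoeff d c κ ‖x‖ / 2 * w x) ^ 2
        + (2 * (c + κ * ‖x‖) * (κ * ‖x‖) - κ * ‖x‖ - 2 * k * ‖x‖ ^ 2) * w x ^ 2) := by
  have hx' := norm_ne_zero_iff.2 hx
  have hα := hasDerivAt_expWeight (c := c) κ hx'
  have hq := hasDerivAt_expCrossCoeff d c κ ‖x‖
  have hg := hasDerivAt_expSqCoeff d c κ k hx'
  unfold expField
  rw [divergence_radial_mul hα.differentiableAt hx (differentiableAt_pohozaevField hw hx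
    hq.differentiableAt hg.differentiableAt), divergence_pohozaevField hw hx hq.differentiableAt
    hg.differentiableAt, radialPart_pohozaevField, hα.deriv, hq.deriv, hg.deriv, hlap]
  unfold expSqCoeff expCrossCoeff
  field_simp
  ring

lemma radialPart_expField (c : ℕ) (κ k : ℝ) (w : Euc d → ℝ) {x : Euc d} (hx : x ≠ 0) :
    radialPart (expField c κ k w) x = expWeight c κ ‖x‖ *
      (2 * euler w x ^ 2 - ‖x‖ ^ 2 * gradSq w x + expCrossCoeff d c κ ‖x‖ * (w x * euler w x)
        + ((c + κ * ‖x‖) * expCrossCoeff d c κ ‖x‖ - κ * ‖x‖ - k * ‖x‖ ^ 2) * w x ^ 2) := by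
  have hx' := norm_ne_zero_iff.2 hx
  unfold expField
  rw [radialPart_radial_mul, radialPart_pohozaevField]
  unfold expSqCoeff
  field_simp

lemma contDiffOn_expField (c : ℕ) (κ k : ℝ) {w : Euc d → ℝ} {ρ : ℝ} (hρ : 0 ≤ ρ)
    (hw : ContDiffOn ℝ 2 w (exterior d ρ)) (i : Fin d) :
    ContDiffOn ℝ 1 (expField c κ k w i) (exterior d ρ) :=
  (contDiffOn_radial hρ (contDiff_expWeight c κ).contDiffOn).mul
    (contDiffOn_pohozaevField hρ hw (contDiff_expCrossCoeff d c κ).contDiffOn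
      (contDiffOn_expSqCoeff d c κ k hρ) i)

lemma divergence_expField_nonneg {c : ℕ} {κ k : ℝ} {w : Euc d → ℝ} {x : Euc d}
    (hw : ContDiffAt ℝ 2 w x) (hx : x ≠ 0) (hc : 1 ≤ c) (hκ : 0 ≤ κ) (hk : k ≤ κ ^ 2)
    (hlap : lap w x = k * w x) : 0 ≤ divergence (expField c κ k w) x := by
  rw [divergence_expField hw hx hlap]
  have hr := norm_pos_iff.2 hx
  have hc' : (1 : ℝ) ≤ c := by exact_mod_cast hc
  have hcoef : 0 ≤ 2 * (c + κ * ‖x‖) * (κ * ‖x‖) - κ * ‖x‖ - 2 * k * ‖x‖ ^ 2 := by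
    have hκr : 0 ≤ κ * ‖x‖ := by positivity
    have hkr := mul_le_mul_of_nonneg_right hk (sq_nonneg ‖x‖)
    nlinarith
  have hα := expWeight_pos c κ hr
  positivity

lemma le_radialPart_expField {c : ℕ} {κ k : ℝ} {w : Euc d → ℝ} {x : Euc d} (hx : x ≠ 0)
    (hc : d + 3 ≤ c) (hκ : 0 ≤ κ) (hk : k ≤ κ ^ 2) :
    expWeight c κ ‖x‖ * (c * w x ^ 2 - ‖x‖ ^ 2 * gradSq w x) ≤
      radialPart (expField c κ k w) x := by
  rw [radialPart_expField c κ k w hx]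
  refine mul_le_mul_of_nonneg_left ?_ (expWeight_pos c κ (norm_pos_iff.2 hx)).le
  have hkr := mul_le_mul_of_nonneg_right hk (sq_nonneg ‖x‖)
  have hκr : 0 ≤ κ * ‖x‖ := by positivity
  have hc' : (d : ℝ) + 3 ≤ c := by exact_mod_cast hc
  set q := expCrossCoeff d c κ ‖x‖ with hq
  have hcoef : (c : ℝ) ≤ (c + κ * ‖x‖) * q - κ * ‖x‖ - k * ‖x‖ ^ 2 - q ^ 2 / 8 := by
    rw [expCrossCoeff] at hq
    have hmain : κ * ‖x‖ + (κ * ‖x‖) ^ 2 + c ≤ (c + κ * ‖x‖) ^ 2 := by nlinarith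
    have hrest : 0 ≤ (c + κ * ‖x‖) ^ 2 / 2 + (c + κ * ‖x‖) * (d - 2) / 2
        - ((d : ℝ) - 2) ^ 2 / 8 := by
      nlinarith
    rw [hq]
    linarith
  have hv := mul_le_mul_of_nonneg_right hcoef (sq_nonneg (w x))
  have hsq : 0 ≤ 2 * (euler w x + q / 4 * w x) ^ 2 := by positivity
  linarith

lemma exists_abs_expCrossCoeff_le (d c : ℕ) {κ : ℝ} (k : ℝ) (hκ : 0 ≤ κ) :
    ∃ B, ∀ R t : ℝ, 1 ≤ R → 0 ≤ t → t ≤ R → |expCrossCoeff d c κ t| ≤ B * R ∧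
      |(c + κ * t) * expCrossCoeff d c κ t - κ * t - k * t ^ 2| ≤ (B ^ 2 + κ + |k|) * R ^ 2 := by
  refine ⟨2 * c + 2 * κ + d + 2, fun R t hR ht htR => ?_⟩
  set B : ℝ := 2 * c + 2 * κ + d + 2
  have hκt : 0 ≤ κ * t := by positivity
  have hκR : κ * t ≤ κ * R := by gcongr
  have hκR₂ : κ * t ≤ κ * R ^ 2 := hκR.trans (by gcongr; nlinarith)
  have hcR : (2 * c + d + 2) * 1 ≤ (2 * c + d + 2) * R := by gcongr
  have hq : |expCrossCoeff d c κ t| ≤ B * R := by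
    rw [expCrossCoeff, abs_le]
    constructor <;> linarith
  have hp : |c + κ * t| ≤ B * R := by
    rw [abs_of_nonneg (by positivity)]
    linarith
  have hpq : |(c + κ * t) * expCrossCoeff d c κ t| ≤ (B * R) * (B * R) := by
    rw [abs_mul]
    gcongr
  have hkt : |k * t ^ 2| ≤ |k| * R ^ 2 := by
    rw [abs_mul, abs_of_nonneg (sq_nonneg t)]
    gcongr
  refine ⟨hq, ?_⟩
  rw [abs_le] at hpq hkt ⊢
  constructor <;> linarith

lemma exists_abs_radialPart_expField_le (c : ℕ) {κ : ℝ} (k : ℝ) (hκ : 0 ≤ κ) :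
    ∃ K, 0 ≤ K ∧ ∀ (w : Euc d → ℝ) (R : ℝ) (x : Euc d), 1 ≤ R → x ≠ 0 → ‖x‖ ≤ R →
      |radialPart (expField c κ k w) x| ≤
        K * (expWeight c κ R * R ^ 2) * (gradSq w x + w x ^ 2) := by
  obtain ⟨B, hcoef⟩ := exists_abs_expCrossCoeff_le d c k hκ
  refine ⟨2 * B ^ 2 + κ + |k| + 4, by positivity, fun w R x hR hx hxR => ?_⟩
  have hr := norm_pos_iff.2 hx
  obtain ⟨hq, hm⟩ := hcoef R ‖x‖ hR hr.le hxR
  have hG := gradSq_nonneg w x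
  have hE : euler w x ^ 2 ≤ R ^ 2 * gradSq w x := (euler_sq_le w x).trans (by gcongr)
  have hrG : ‖x‖ ^ 2 * gradSq w x ≤ R ^ 2 * gradSq w x := by gcongr
  have hcross : |expCrossCoeff d c κ ‖x‖ * (w x * euler w x)| ≤
      (B * R) ^ 2 * w x ^ 2 + R ^ 2 * gradSq w x := by
    have hq₂ := mul_le_mul_of_nonneg_right (sq_le_sq' (abs_le.1 hq).1 (abs_le.1 hq).2)
      (sq_nonneg (w x))
    have hadd := sq_nonneg (expCrossCoeff d c κ ‖x‖ * w x + euler w x)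
    have hsub := sq_nonneg (expCrossCoeff d c κ ‖x‖ * w x - euler w x)
    rw [abs_le]
    constructor <;> linarith
  have hmw := mul_le_mul_of_nonneg_right hm (sq_nonneg (w x))
  rw [← abs_of_nonneg (sq_nonneg (w x)), ← abs_mul, abs_of_nonneg (sq_nonneg (w x))] at hmw
  rw [radialPart_expField c κ k w hx, abs_mul, abs_of_pos (expWeight_pos c κ hr)]
  have hbracket : |2 * euler w x ^ 2 - ‖x‖ ^ 2 * gradSq w x
      + expCrossCoeff d c κ ‖x‖ * (w x * euler w x)
      + ((c + κ * ‖x‖) * expCrossCoeff d c κ ‖x‖ - κ * ‖x‖ - k * ‖x‖ ^ 2) * w x ^ 2| ≤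
      (2 * B ^ 2 + κ + |k| + 4) * R ^ 2 * (gradSq w x + w x ^ 2) := by
    have hrest : 0 ≤ (2 * B ^ 2 + κ + |k| + 1) * R ^ 2 * gradSq w x + 4 * R ^ 2 * w x ^ 2 := by
      positivity
    have := sq_nonneg (euler w x)
    have : 0 ≤ ‖x‖ ^ 2 * gradSq w x := by positivity
    rw [abs_le] at hcross hmw ⊢
    constructor <;> linarith [mul_nonneg (mul_nonneg (sq_nonneg B) (sq_nonneg R)) (sq_nonneg (w x))]
  refine (mul_le_mul (expWeight_mono c hκ hr.le hxR) hbracket (abs_nonneg _)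
    (expWeight_pos c κ (by linarith)).le).trans_eq (by ring)

/-- A smooth bump, `1` on `[-1, 0]` and `0` outside `(-2, 1)`. -/
def shellBump (s : ℝ) : ℝ := Real.smoothTransition (2 + s) * Real.smoothTransition (1 - s)

lemma contDiff_shellBump : ContDiff ℝ 1 shellBump :=
  (Real.smoothTransition.contDiff.comp (contDiff_const.add contDiff_id)).mul
    (Real.smoothTransition.contDiff.comp (contDiff_const.sub contDiff_id))

lemma shellBump_eq_one {s : ℝ} (h₁ : -1 ≤ s) (h₂ : s ≤ 0) : shellBump s = 1 := by
  rw [shellBump, Real.smoothTransition.one_of_one_le (by linarith),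
    Real.smoothTransition.one_of_one_le (by linarith), one_mul]

lemma shellBump_of_le {s : ℝ} (h : s ≤ -2) : shellBump s = 0 := by
  rw [shellBump, Real.smoothTransition.zero_of_nonpos (by linarith), zero_mul]

lemma shellBump_of_ge {s : ℝ} (h : 1 ≤ s) : shellBump s = 0 := by
  rw [shellBump, Real.smoothTransition.zero_of_nonpos (x := 1 - s) (by linarith), mul_zero]

lemma exists_abs_le_of_hasCompactSupport {f : ℝ → ℝ} (hc : Continuous f)
    (hs : HasCompactSupport f) : ∃ D, 0 ≤ D ∧ ∀ s, |f s| ≤ D := by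
  obtain ⟨D, hD⟩ := hc.bounded_above_of_compact_support hs
  exact ⟨D, (norm_nonneg _).trans (hD 0), hD⟩

lemma hasCompactSupport_deriv_smoothTransition :
    HasCompactSupport (deriv Real.smoothTransition) :=
  HasCompactSupport.intro (isCompact_Icc (a := (0 : ℝ)) (b := 1)) fun s hs => by
    rcases lt_or_ge s 0 with h | h
    · exact deriv_smoothTransition_of_neg h
    · exact deriv_smoothTransition_of_one_lt (not_le.1 fun h₁ => hs ⟨h, h₁⟩)

lemma radialPart_mul_pd (w : Euc d → ℝ) (x : Euc d) :
    radialPart (fun i y => w y * pd w i y) x = w x * euler w x := by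
  simp only [radialPart, euler, Finset.mul_sum, mul_left_comm]

/- Caccioppoli's inequality: the gradient term of `div (η² w∇w)` absorbs half of the derivative of
the cutoff. -/
lemma sq_mul_gradSq_add_sq_le {w : Euc d → ℝ} {k e e' : ℝ} {x : Euc d}
    (hw : ContDiffAt ℝ 2 w x) (hx : x ≠ 0) (hlap : lap w x = k * w x) :
    e ^ 2 * (gradSq w x + w x ^ 2) ≤
      2 * (e ^ 2 * divergence (fun i y => w y * pd w i y) x
        + 2 * e * e' / ‖x‖ * radialPart (fun i y => w y * pd w i y) x)
      + ((1 + 2 * |k|) * e ^ 2 + 4 * e' ^ 2) * w x ^ 2 := by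
  have hdiv : divergence (fun i y => w y * pd w i y) x = k * w x ^ 2 + gradSq w x := by
    rw [divergence_mul_pd (hw.differentiableAt (by norm_num)) hw, hlap, gradSq]
    simp only [← sq]; ring
  have hN : (euler w x / ‖x‖) ^ 2 ≤ gradSq w x := by
    rw [div_pow, div_le_iff₀' (by positivity)]
    exact euler_sq_le w x
  rw [hdiv, radialPart_mul_pd, show 2 * e * e' / ‖x‖ * (w x * euler w x) =
    2 * e * e' * w x * (euler w x / ‖x‖) by ring]
  generalize euler w x / ‖x‖ = N at *
  have hk := mul_le_mul_of_nonneg_right (neg_abs_le k) (sq_nonneg (e * w x))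
  have hsq := sq_nonneg (e * N + 2 * e' * w x)
  have hG := mul_le_mul_of_nonneg_left hN (sq_nonneg e)
  linarith

lemma integral_sq_mul_gradSq_add_sq_le {η : ℝ → ℝ} {w : Euc d → ℝ} {k ρ r₁ r₂ : ℝ} (hρ : 0 ≤ ρ)
    (hr₁ : ρ < r₁) (hη : ContDiff ℝ 1 η) (hη₁ : ∀ t ≤ r₁, η t = 0)
    (hη₂ : ∀ t, r₂ ≤ t → η t = 0) (hw : ContDiffOn ℝ 2 w (exterior d ρ))
    (hlap : ∀ x ∈ exterior d ρ, lap w x = k * w x) :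
    ∫ x, η ‖x‖ ^ 2 * (gradSq w x + w x ^ 2) ≤
      ∫ x, ((1 + 2 * |k|) * η ‖x‖ ^ 2 + 4 * deriv η ‖x‖ ^ 2) * w x ^ 2 := by
  obtain ⟨s₁, hs₁, hsr⟩ := exists_between hr₁
  have hη'₁ : ∀ t ≤ s₁, deriv η t = 0 := fun t ht =>
    deriv_eq_zero_of_const_left hη₁ (ht.trans_lt hsr)
  have hη'₂ : ∀ t, r₂ + 1 ≤ t → deriv η t = 0 := fun t ht =>
    deriv_eq_zero_of_const_right hη₂ (by linarith)
  have hη' := hη.continuous_deriv le_rfl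
  have hsq := hη.pow 2
  have hsq₁ : ∀ t ≤ r₁, η t ^ 2 = 0 := fun t ht => by simp [hη₁ t ht]
  have hsq₂ : ∀ t, r₂ ≤ t → η t ^ 2 = 0 := fun t ht => by simp [hη₂ t ht]
  have hX : ∀ i, ContDiffOn ℝ 1 (fun y => w y * pd w i y) (exterior d ρ) := fun i =>
    (hw.of_le (by norm_num)).mul (contDiffOn_pd hw i)
  have hw₂ : ContinuousOn (fun x => w x ^ 2) (exterior d ρ) := hw.continuousOn.pow 2
  have hi₀ := integrable_radial_mul hρ hr₁ hsq.continuous.continuousOn hsq₁ hsq₂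
    ((contDiffOn_gradSq hw).continuousOn.add hw₂)
  have hi₁ := integrable_cutoff_mul_divergence hρ hr₁ hsq.contDiffOn hsq₁ hsq₂ hX
  have hgreen := integral_cutoff_mul_divergence hρ hr₁ hsq.contDiffOn hsq₁ hsq₂ hX
  have hi₂ : Integrable fun x => ((1 + 2 * |k|) * η ‖x‖ ^ 2 + 4 * deriv η ‖x‖ ^ 2) * w x ^ 2 :=
    integrable_radial_mul (ψ := fun t => (1 + 2 * |k|) * η t ^ 2 + 4 * deriv η t ^ 2)
      (r₂ := r₂ + 1) hρ hs₁
      (((hη.continuous.pow 2).const_mul _).add ((hη'.pow 2).const_mul 4)).continuousOn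
      (fun t ht => by simp [hη₁ t (by linarith), hη'₁ t ht])
      (fun t ht => by simp [hη₂ t (by linarith), hη'₂ t ht]) hw₂
  refine (integral_mono hi₀ ((hi₁.const_mul 2).add hi₂) fun x => ?_).trans_eq ?_
  · rcases lt_or_ge ρ ‖x‖ with hx | hx
    · have := sq_mul_gradSq_add_sq_le (e := η ‖x‖) (e' := deriv η ‖x‖)
        (contDiffAt_of_mem_exterior hw hx) (ne_zero_of_mem_exterior hρ hx) (hlap x hx)
      simpa [deriv_fun_pow (hη.differentiable one_ne_zero ‖x‖)] using this
    · have hd : deriv (fun t => η t ^ 2) ‖x‖ = 0 :=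
        deriv_eq_zero_of_const_left hsq₁ (hx.trans_lt hr₁)
      simp [hη₁ _ (hx.trans hr₁.le), hη'₁ _ (hx.trans hs₁.le), hd]
  · simp only [Pi.add_apply]
    rw [integral_add (hi₁.const_mul 2) hi₂, integral_const_mul, hgreen, mul_zero, zero_add]

lemma sq_le_of_abs_le_exp {w : Euc d → ℝ} {C a s : ℝ} {x : Euc d} (ha : 0 ≤ a) (hs : s ≤ ‖x‖)
    (h : |w x| ≤ C * Real.exp (-(a * ‖x‖))) : w x ^ 2 ≤ C ^ 2 * Real.exp (-(2 * a * s)) := by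
  calc w x ^ 2 ≤ (C * Real.exp (-(a * ‖x‖))) ^ 2 := sq_le_sq' (abs_le.1 h).1 (abs_le.1 h).2
    _ = C ^ 2 * Real.exp (-(2 * a * ‖x‖)) := by
      rw [mul_pow, ← Real.exp_nat_mul]; push_cast; ring_nf
    _ ≤ C ^ 2 * Real.exp (-(2 * a * s)) := by gcongr

lemma integral_le_mul_pow_of_le_indicator {f : Euc d → ℝ} {m R : ℝ} (hR : 0 ≤ R)
    (hf₀ : ∀ x, 0 ≤ f x) (hf : ∀ x, f x ≤ (closedBall 0 R).indicator (fun _ => m) x) :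
    ∫ x, f x ≤ m * (R ^ d * volume.real (ball (0 : Euc d) 1)) := by
  have hint : Integrable ((closedBall (0 : Euc d) R).indicator fun _ => m) :=
    (integrableOn_const measure_closedBall_lt_top.ne).integrable_indicator measurableSet_closedBall
  refine (integral_mono_of_nonneg (ae_of_all _ hf₀) hint (ae_of_all _ hf)).trans_eq ?_
  rw [integral_indicator_const _ measurableSet_closedBall, Measure.addHaar_real_closedBall _ _ hR,
    finrank_euclideanSpace_fin, smul_eq_mul, mul_comm]

lemma exists_shellBump_sq_add_le (p q : ℝ) :
    ∃ A, 0 ≤ A ∧ ∀ s, p * shellBump s ^ 2 + q * deriv shellBump s ^ 2 ≤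
      (Icc (-2) 1).indicator (fun _ => A) s := by
  have hout : ∀ s ∉ Icc (-2 : ℝ) 1, p * shellBump s ^ 2 + q * deriv shellBump s ^ 2 = 0 :=
    fun s hs => by
      rcases lt_or_ge s (-2) with h | h
      · simp [shellBump_of_le h.le, deriv_eq_zero_of_const_left (fun _ => shellBump_of_le) h]
      · have h₁ : 1 < s := not_le.1 fun h₁ => hs ⟨h, h₁⟩
        simp [shellBump_of_ge h₁.le, deriv_eq_zero_of_const_right (fun _ => shellBump_of_ge) h₁]
  have hcont : Continuous fun s => p * shellBump s ^ 2 + q * deriv shellBump s ^ 2 :=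
    ((contDiff_shellBump.continuous.pow 2).const_mul p).add
      (((contDiff_shellBump.continuous_deriv le_rfl).pow 2).const_mul q)
  obtain ⟨A, hA, hle⟩ := exists_abs_le_of_hasCompactSupport hcont
    (HasCompactSupport.intro isCompact_Icc hout)
  refine ⟨A, hA, fun s => ?_⟩
  by_cases hs : s ∈ Icc (-2) 1
  · rw [indicator_of_mem hs]
    exact (le_abs_self _).trans (hle s)
  · rw [indicator_of_notMem hs, hout s hs]

lemma exists_integral_shellBump_sq_mul_le {w : Euc d → ℝ} {C a k ρ : ℝ} (hρ : 0 ≤ ρ) (ha : 0 ≤ a)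
    (hw : ContDiffOn ℝ 2 w (exterior d ρ)) (hlap : ∀ x ∈ exterior d ρ, lap w x = k * w x)
    (hdecay : ∀ x ∈ exterior d ρ, |w x| ≤ C * Real.exp (-(a * ‖x‖))) :
    ∃ K, ∀ R, 1 ≤ R → ρ + 2 < R →
      ∫ x, shellBump (‖x‖ - R) ^ 2 * (gradSq w x + w x ^ 2) ≤
        K * (R ^ d * Real.exp (-(2 * a * R))) := by
  obtain ⟨A, hA, hbump⟩ := exists_shellBump_sq_add_le (1 + 2 * |k|) 4
  refine ⟨A * (C ^ 2 * Real.exp (4 * a)) * 2 ^ d * volume.real (ball (0 : Euc d) 1),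
    fun R hR₁ hR => ?_⟩
  set m := A * (C ^ 2 * Real.exp (-(2 * a * (R - 2)))) with hm
  refine (integral_sq_mul_gradSq_add_sq_le hρ (show ρ < R - 2 by linarith) (r₂ := R + 1)
    (contDiff_shellBump.comp (contDiff_id.sub contDiff_const))
    (fun t ht => shellBump_of_le (by simp only [id]; linarith))
    (fun t ht => shellBump_of_ge (by simp only [id]; linarith)) hw hlap).trans ?_
  simp only [Function.comp_apply, Function.comp_def, id, deriv_comp_sub_const]
  have hpoint : ∀ x : Euc d, ((1 + 2 * |k|) * shellBump (‖x‖ - R) ^ 2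
      + 4 * deriv shellBump (‖x‖ - R) ^ 2) * w x ^ 2 ≤
      (closedBall 0 (R + 1)).indicator (fun _ => m) x := fun x => by
    refine (mul_le_mul_of_nonneg_right (hbump (‖x‖ - R)) (sq_nonneg (w x))).trans ?_
    by_cases hx : ‖x‖ - R ∈ Icc (-2) 1
    · have hx₂ : R - 2 ≤ ‖x‖ := by linarith [hx.1]
      rw [indicator_of_mem hx, indicator_of_mem (by simpa [add_comm] using hx.2)]
      exact mul_le_mul_of_nonneg_left
        (sq_le_of_abs_le_exp ha hx₂ (hdecay x (show ρ < ‖x‖ by linarith))) hA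
    · rw [indicator_of_notMem hx, zero_mul]
      exact indicator_nonneg (fun _ _ => by positivity) x
  have hpow : (R + 1) ^ d ≤ 2 ^ d * R ^ d := by
    rw [← mul_pow]
    gcongr
    linarith
  calc _ ≤ m * ((R + 1) ^ d * volume.real (ball (0 : Euc d) 1)) :=
        integral_le_mul_pow_of_le_indicator (by linarith) (fun x => by positivity) hpoint
    _ ≤ m * (2 ^ d * R ^ d * volume.real (ball (0 : Euc d) 1)) := by gcongr
    _ = _ := by
      rw [hm, show -(2 * a * (R - 2)) = 4 * a + -(2 * a * R) by ring, Real.exp_add]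
      ring

lemma exists_abs_shellFlux_expField_le (c : ℕ) {κ ρ : ℝ} (k : ℝ) {w : Euc d → ℝ} (hκ : 0 ≤ κ)
    (hρ : 0 ≤ ρ) (hw : ContDiffOn ℝ 2 w (exterior d ρ)) :
    ∃ K, 0 ≤ K ∧ ∀ T, 2 ≤ T → ρ + 2 < T → |shellFlux (expField c κ k w) T| ≤
      K * (expWeight c κ T * T ^ 2) *
        ∫ x, shellBump (‖x‖ - T) ^ 2 * (gradSq w x + w x ^ 2) := by
  obtain ⟨D, hD, hcut⟩ := exists_abs_le_of_hasCompactSupport continuous_deriv_smoothTransition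
    hasCompactSupport_deriv_smoothTransition
  obtain ⟨K, hK, hrad⟩ := exists_abs_radialPart_expField_le (d := d) c k hκ
  refine ⟨D * K, by positivity, fun T hT hρT => ?_⟩
  have hint : Integrable fun x => shellBump (‖x‖ - T) ^ 2 * (gradSq w x + w x ^ 2) :=
    integrable_radial_mul (ψ := fun t => shellBump (t - T) ^ 2) (r₂ := T + 1) hρ
      (show ρ < T - 2 by linarith)
      ((contDiff_shellBump.continuous.comp (continuous_sub_right T)).pow 2).continuousOn
      (fun t ht => by simp [shellBump_of_le (show t - T ≤ -2 by linarith)])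
      (fun t ht => by simp [shellBump_of_ge (show 1 ≤ t - T by linarith)])
      ((contDiffOn_gradSq hw).continuousOn.add (hw.continuousOn.pow 2))
  rw [← integral_const_mul, ← Real.norm_eq_abs]
  refine norm_integral_le_of_norm_le (hint.const_mul _) (ae_of_all _ fun x => ?_)
  have hW := expWeight_pos c κ (show 0 < T by linarith)
  have hG := gradSq_nonneg w x
  by_cases hx : T - 1 ≤ ‖x‖ ∧ ‖x‖ ≤ T
  · have hx₁ : 1 ≤ ‖x‖ := by linarith
    rw [shellBump_eq_one (by linarith) (by linarith), norm_mul, norm_div, Real.norm_eq_abs,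
      Real.norm_eq_abs, norm_norm]
    calc _ ≤ D * (K * (expWeight c κ T * T ^ 2) * (gradSq w x + w x ^ 2)) := by
          refine mul_le_mul (hcut _) ?_ (by positivity) hD
          exact (div_le_self (abs_nonneg _) hx₁).trans
            (hrad w T x (by linarith) (norm_pos_iff.1 (by linarith)) hx.2)
      _ = _ := by ring
  · have hzero : deriv Real.smoothTransition (T - ‖x‖) = 0 := by
      rcases not_and_or.1 hx with h | h
      · exact deriv_smoothTransition_of_one_lt (by linarith)
      · exact deriv_smoothTransition_of_neg (by linarith)
    rw [hzero, zero_mul, norm_zero]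
    positivity

lemma tendsto_expWeight_mul_pow_mul_exp_neg (c m : ℕ) {κ a : ℝ} (hκa : κ < a) :
    Tendsto (fun T => expWeight c κ T * T ^ m * Real.exp (-(2 * a * T))) atTop (nhds 0) := by
  have hlim := (isLittleO_pow_exp_pos_mul_atTop (2 * c + m)
    (show 0 < 2 * (a - κ) by linarith)).tendsto_div_nhds_zero
  refine hlim.congr fun T => ?_
  rw [expWeight, pow_add, div_eq_mul_inv, ← Real.exp_neg,
    show -(2 * (a - κ) * T) = 2 * κ * T + -(2 * a * T) by ring, Real.exp_add]
  ring

lemma isInflow_expField {c : ℕ} {w : Euc d → ℝ} {C a κ k ρ : ℝ} (hρ : 0 ≤ ρ) (hc : 1 ≤ c)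
    (hκ : 0 ≤ κ) (hκa : κ < a) (hk : k ≤ κ ^ 2) (hw : ContDiffOn ℝ 2 w (exterior d ρ))
    (hlap : ∀ x ∈ exterior d ρ, lap w x = k * w x)
    (hdecay : ∀ x ∈ exterior d ρ, |w x| ≤ C * Real.exp (-(a * ‖x‖))) :
    IsInflow ρ (expField c κ k w) where
  contDiffOn := contDiffOn_expField c κ k hρ hw
  divergence_nonneg x hx := divergence_expField_nonneg (contDiffAt_of_mem_exterior hw hx)
    (ne_zero_of_mem_exterior hρ hx) hc hκ hk (hlap x hx)
  tendsto_shellFlux := by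
    obtain ⟨K, hK, hflux⟩ := exists_abs_shellFlux_expField_le c k hκ hρ hw
    obtain ⟨L, hshell⟩ := exists_integral_shellBump_sq_mul_le hρ (hκ.trans hκa.le) hw hlap
      hdecay
    refine squeeze_zero_norm' ?_ (by simpa using
      (tendsto_expWeight_mul_pow_mul_exp_neg c (2 + d) hκa).const_mul (K * L))
    filter_upwards [eventually_ge_atTop 2, eventually_gt_atTop (ρ + 2)] with T hT hρT
    have hW := expWeight_pos c κ (show 0 < T by linarith)
    calc _ ≤ _ := hflux T hT hρT
      _ ≤ K * (expWeight c κ T * T ^ 2) * (L * (T ^ d * Real.exp (-(2 * a * T)))) := by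
        gcongr
        exact hshell T (by linarith) hρT
      _ = _ := by rw [pow_add]; ring

theorem eq_zero_of_lap_eq_of_decay {w : Euc d → ℝ} {C a κ k ρ : ℝ} (hρ : 0 ≤ ρ) (hκ : 0 ≤ κ)
    (hκa : κ < a) (hk : k ≤ κ ^ 2) (hw : ContDiffOn ℝ 2 w (exterior d ρ))
    (hlap : ∀ x ∈ exterior d ρ, lap w x = k * w x)
    (hdecay : ∀ x ∈ exterior d ρ, |w x| ≤ C * Real.exp (-(a * ‖x‖))) {x : Euc d}
    (hx : x ∈ exterior d ρ) : w x = 0 := by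
  refine pow_eq_zero_iff two_ne_zero |>.1 (eq_zero_of_isInflow (f := fun x => w x ^ 2)
    (g := fun x => ‖x‖ ^ 2 * gradSq w x) hρ (hw.continuousOn.pow 2)
    ((continuous_norm.pow 2).continuousOn.mul (contDiffOn_gradSq hw).continuousOn)
    (fun x => sq_nonneg _) (fun A => ?_) hx)
  obtain ⟨n, hn⟩ := exists_nat_ge A
  have hcd : d + 3 ≤ max n (d + 3) := le_max_right _ _
  exact ⟨(max n (d + 3) : ℕ), hn.trans (mod_cast le_max_left _ _), expWeight (max n (d + 3)) κ,
    expField (max n (d + 3)) κ k w, (contDiff_expWeight _ κ).continuous.continuousOn,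
    fun t ht => expWeight_pos _ κ (hρ.trans_lt ht),
    isInflow_expField hρ (by omega) hκ hκa hk hw hlap hdecay,
    fun x hx => le_radialPart_expField (ne_zero_of_mem_exterior hρ hx) hcd hκ hk⟩

/-! ### Constant drift -/

lemma lap_mul {f g : Euc d → ℝ} {x : Euc d} (hf : ContDiffAt ℝ 2 f x) (hg : ContDiffAt ℝ 2 g x) :
    lap (fun y => f y * g y) x =
      f x * lap g x + 2 * (∑ i, pd f i x * pd g i x) + g x * lap f x := by
  have hpd : ∀ i, pd (fun z => f z * g z) i =ᶠ[nhds x] fun y => f y * pd g i y + g y * pd f i y :=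
    fun i => by
      filter_upwards [hf.eventually (by simp), hg.eventually (by simp)] with y hfy hgy
      exact pd_mul (hfy.differentiableAt (by norm_num)) (hgy.differentiableAt (by norm_num)) i
  have hf₀ : DifferentiableAt ℝ f x := hf.differentiableAt (by norm_num)
  have hg₀ : DifferentiableAt ℝ g x := hg.differentiableAt (by norm_num)
  calc lap (fun y => f y * g y) x
      = divergence (fun i y => f y * pd g i y + g y * pd f i y) x :=
        Finset.sum_congr rfl fun i _ => pd_congr (hpd i) i
    _ = (f x * lap g x + ∑ i, pd f i x * pd g i x)
          + (g x * lap f x + ∑ i, pd g i x * pd f i x) := by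
        rw [divergence_add (fun i => hf₀.fun_mul (differentiableAt_pd hg i))
          (fun i => hg₀.fun_mul (differentiableAt_pd hf i)), divergence_mul_pd hf₀ hg,
          divergence_mul_pd hg₀ hf]
    _ = _ := by
        simp only [mul_comm (pd g _ x)]
        ring

lemma contDiff_exp_inner (b : Euc d) : ContDiff ℝ 2 fun y => Real.exp (inner ℝ b y / 2) :=
  ((innerSL ℝ b).contDiff.div_const 2).exp

lemma pd_exp_inner (b : Euc d) (i : Fin d) :
    pd (fun y => Real.exp (inner ℝ b y / 2)) i = fun x => b i / 2 * Real.exp (inner ℝ b x / 2) := by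
  funext x
  have h : HasFDerivAt (fun y : Euc d => Real.exp (inner ℝ b y / 2)) _ x :=
    (((innerSL ℝ b).hasFDerivAt (x := x)).mul_const (2⁻¹ : ℝ)).exp
  rw [pd, h.fderiv]
  simp [EuclideanSpace.inner_single_right, div_eq_mul_inv, mul_comm]

lemma lap_exp_inner (b x : Euc d) :
    lap (fun y => Real.exp (inner ℝ b y / 2)) x = ‖b‖ ^ 2 / 4 * Real.exp (inner ℝ b x / 2) := by
  have hpd2 : ∀ i, pd2 (fun y => Real.exp (inner ℝ b y / 2)) i i x =
      b i ^ 2 * (Real.exp (inner ℝ b x / 2) / 4) := fun i => by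
    change pd (pd (fun y => Real.exp (inner ℝ b y / 2)) i) i x = _
    rw [pd_exp_inner, pd_const_mul ((contDiff_exp_inner b).differentiable (by norm_num) x),
      pd_exp_inner]
    ring
  simp only [lap, hpd2, ← Finset.sum_mul, sum_coord_sq]
  ring

lemma lap_exp_inner_mul (b : Euc d) {u : Euc d → ℝ} {x : Euc d} (hu : ContDiffAt ℝ 2 u x) :
    lap (fun y => Real.exp (inner ℝ b y / 2) * u y) x =
      Real.exp (inner ℝ b x / 2) * (lap u x + ∑ i, b i * pd u i x + ‖b‖ ^ 2 / 4 * u x) := by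
  rw [lap_mul (contDiff_exp_inner b).contDiffAt hu, lap_exp_inner]
  simp only [pd_exp_inner, mul_add, Finset.mul_sum]
  congr 1
  · exact congrArg _ (Finset.sum_congr rfl fun i _ => by ring)
  · ring

lemma lap_sq_le_of_lap_add_eq_zero {u : Euc d → ℝ} {x b : Euc d} {M γ v : ℝ} (hb : ‖b‖ ≤ M)
    (hv : |v| ≤ γ) (hu : lap u x + ∑ i, b i * pd u i x + v * u x = 0) :
    lap u x ^ 2 ≤ (2 * M ^ 2 + 2 * γ ^ 2) * (gradSq u x + u x ^ 2) := by
  have hG := gradSq_nonneg u x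
  have hdrift : (∑ i, b i * pd u i x) ^ 2 ≤ M ^ 2 * gradSq u x :=
    (sq_sum_mul_pd_le b u x).trans (by gcongr)
  have hpot : (v * u x) ^ 2 ≤ γ ^ 2 * u x ^ 2 := by
    rw [mul_pow, ← sq_abs v]
    gcongr
  calc lap u x ^ 2 = (∑ i, b i * pd u i x + v * u x) ^ 2 := by
        rw [show lap u x = -(∑ i, b i * pd u i x + v * u x) by linarith, neg_sq]
    _ ≤ 2 * ((∑ i, b i * pd u i x) ^ 2 + (v * u x) ^ 2) := add_sq_le
    _ ≤ 2 * (M ^ 2 * gradSq u x + γ ^ 2 * u x ^ 2) := by gcongr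
    _ ≤ _ := by
        have : 0 ≤ M ^ 2 * u x ^ 2 + γ ^ 2 * gradSq u x := by positivity
        linarith

lemma eq_zero_of_const_coeff_of_decay {u : Euc d → ℝ} {b₀ x : Euc d} {C a k ρ : ℝ} (hρ : 0 ≤ ρ)
    (hu : ContDiffOn ℝ 2 u (exterior d ρ))
    (hsol : ∀ x ∈ exterior d ρ, lap u x + ∑ i, b₀ i * pd u i x + k * u x = 0)
    (ha : ‖b₀‖ / 2 + √(‖b₀‖ ^ 2 / 4 - k) < a)
    (hdecay : ∀ x ∈ exterior d ρ, |u x| ≤ C * Real.exp (-(a * ‖x‖))) (hx : x ∈ exterior d ρ) :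
    u x = 0 := by
  have hlap : ∀ y ∈ exterior d ρ, lap (fun z => Real.exp (inner ℝ b₀ z / 2) * u z) y =
      (‖b₀‖ ^ 2 / 4 - k) * (Real.exp (inner ℝ b₀ y / 2) * u y) := fun y hy => by
    rw [lap_exp_inner_mul b₀ (contDiffAt_of_mem_exterior hu hy)]
    linear_combination Real.exp (inner ℝ b₀ y / 2) * hsol y hy
  have hw_decay : ∀ y ∈ exterior d ρ, |Real.exp (inner ℝ b₀ y / 2) * u y| ≤
      C * Real.exp (-((a - ‖b₀‖ / 2) * ‖y‖)) := fun y hy => by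
    rw [abs_mul, abs_of_pos (Real.exp_pos _)]
    calc Real.exp (inner ℝ b₀ y / 2) * |u y|
        ≤ Real.exp (‖b₀‖ * ‖y‖ / 2) * (C * Real.exp (-(a * ‖y‖))) := by
          gcongr
          exacts [real_inner_le_norm b₀ y, hdecay y hy]
      _ = C * Real.exp (‖b₀‖ * ‖y‖ / 2 + -(a * ‖y‖)) := by rw [Real.exp_add]; ring
      _ = C * Real.exp (-((a - ‖b₀‖ / 2) * ‖y‖)) := by ring_nf
  have hk : ‖b₀‖ ^ 2 / 4 - k ≤ √(‖b₀‖ ^ 2 / 4 - k) ^ 2 := Real.sq_sqrt'.symm ▸ le_max_left _ _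
  have hzero := eq_zero_of_lap_eq_of_decay hρ (Real.sqrt_nonneg _) (by linarith) hk
    ((contDiff_exp_inner b₀).contDiffOn.mul hu) hlap hw_decay hx
  exact (mul_eq_zero.1 hzero).resolve_left (Real.exp_pos _).ne'

theorem statement17_general {ρ r M γ C a k : ℝ} (hρ : 0 ≤ ρ) {b : Euc d → Euc d} {V : Euc d → ℝ}
    {u : Euc d → ℝ} (hb : ∀ x ∈ exterior d ρ, ‖b x‖ ≤ M) (hV : ∀ x ∈ exterior d ρ, |V x| ≤ γ)
    {b₀ : Euc d} (hconst : ∀ x ∈ exterior d r, b x = b₀ ∧ V x = k)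
    (hu : ContDiffOn ℝ 2 u (exterior d ρ))
    (hsol : ∀ x ∈ exterior d ρ, lap u x + ∑ i, b x i * pd u i x + V x * u x = 0)
    (ha : ‖b₀‖ / 2 + √(‖b₀‖ ^ 2 / 4 - k) < a)
    (hdecay : ∀ x ∈ exterior d ρ, |u x| ≤ C * Real.exp (-(a * ‖x‖))) :
    ∀ x ∈ exterior d ρ, u x = 0 := by
  have hsub : exterior d (max r ρ) ⊆ exterior d ρ := fun x hx => (le_max_right r ρ).trans_lt hx
  have hout : ∀ x, max r ρ < ‖x‖ → u x = 0 := fun x hx =>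
    eq_zero_of_const_coeff_of_decay (b₀ := b₀) (k := k) (le_max_of_le_right hρ) (hu.mono hsub)
      (fun y hy => by
        obtain ⟨hby, hVy⟩ := hconst y ((le_max_left r ρ).trans_lt hy)
        simpa only [hby, hVy] using hsol y (hsub hy))
      ha (fun y hy => hdecay y (hsub hy)) hx
  exact fun x hx => eq_zero_of_lap_sq_le hρ hu
    (fun y hy => lap_sq_le_of_lap_add_eq_zero (hb y hy) (hV y hy) (hsol y hy)) hout hx

end

/-- Theorem 4.3: Landis' conjecture for `Δu + ⟨b,∇u⟩ + Vu = 0` when `b` and `V` are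
constant outside a ball. -/
theorem statement17 {d : ℕ} (hd : 2 ≤ d)
    (ρ : ℝ) (hρ : 0 ≤ ρ)
    (b : Euc d → Euc d) (V : Euc d → ℝ) (hbMeas : Measurable b) (hVmeas : Measurable V)
    (M γ : ℝ) (hbM : ∀ x : Euc d, ‖b x‖ ≤ M) (hVγ : ∀ x : Euc d, |V x| ≤ γ)
    (r : ℝ) (hr : 0 < r) (hsub : closedBall (0 : Euc d) ρ ⊆ ball (0 : Euc d) r)
    (hconst : ∃ (b₀ : Euc d) (k : ℝ), ∀ x ∉ ball (0 : Euc d) r, b x = b₀ ∧ V x = k)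
    (u : Euc d → ℝ) (huC2 : ContDiffOn ℝ 2 u (closedBall (0 : Euc d) ρ)ᶜ)
    (hsol : ∀ x ∉ closedBall (0 : Euc d) ρ,
      (∑ i, pd2 u i i x) + (∑ i, b x i * pd u i x) + V x * u x = 0)
    (ε Cε : ℝ) (hε : 0 < ε) (hCε : 0 < Cε)
    (hdecay : ∀ x ∉ closedBall (0 : Euc d) ρ,
      |u x| ≤ Cε * Real.exp (-((M / 2 + Real.sqrt (M ^ 2 / 4 + γ) + ε) * ‖x‖))) :
    ∀ x ∉ closedBall (0 : Euc d) ρ, u x = 0 := by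
  obtain ⟨b₀, k, hconst⟩ := hconst
  have hext : (closedBall (0 : Euc d) ρ)ᶜ = exterior d ρ := by ext x; simp
  obtain ⟨x₀, hx₀⟩ : ∃ x₀ : Euc d, x₀ ∉ ball (0 : Euc d) r :=
    ⟨EuclideanSpace.single ⟨0, by omega⟩ r, by simp [le_abs_self]⟩
  have hb₀ : ‖b₀‖ ≤ M := (hconst x₀ hx₀).1 ▸ hbM x₀
  have hk : -γ ≤ k := (abs_le.1 ((hconst x₀ hx₀).2 ▸ hVγ x₀)).1
  have hrate : √(‖b₀‖ ^ 2 / 4 - k) ≤ √(M ^ 2 / 4 + γ) := by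
    have : ‖b₀‖ ^ 2 ≤ M ^ 2 := by gcongr
    exact Real.sqrt_le_sqrt (by linarith)
  simp only [← mem_compl_iff, hext] at huC2 hsol hdecay ⊢
  exact statement17_general hρ (fun x _ => hbM x) (fun x _ => hVγ x)
    (fun x hx => hconst x (by simpa using hx.le)) huC2 hsol (by linarith) hdecay
end
end
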